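/- Let N be a polyhedral norm on ℝ^m (a norm whose closed unit ball has finitely many extreme points), X a nonempty compact subset of ℝ^m, I and J finite nonempty sets, q : X × I × J → X a deterministic commutative transition such that q(·, i, j) is 1-Lipschitz with respect to N for every (i,j) ∈ I × J, and g : X × I × J → [0,1] such that g(·, i, j) is continuous for every (i,j). Then for every initial state x₁ ∈ X the stochastic game Γ(x₁) has a uniform value. -/

import Mathlib

open Filter Topology

noncomputable section

/-- Expected total payoff over `n` stages in a deterministic two-player stochastic game, when
player 1 uses the behavioral strategy `σ`, player 2 uses `τ`, the current state is `x` and the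
past history (sequence of action pairs) is `h`. At each stage the two actions are drawn
independently according to `σ h` and `τ h`. -/
def expPay {X I J : Type*} [Fintype I] [Fintype J]
    (q : X → I → J → X) (g : X → I → J → ℝ)
    (σ : List (I × J) → PMF I) (τ : List (I × J) → PMF J) :
    ℕ → X → List (I × J) → ℝ
  | 0, _, _ => 0
  | n + 1, x, h => ∑ i : I, ∑ j : J, ((σ h) i).toReal * ((τ h) j).toReal *
      (g x i j + expPay q g σ τ n (q x i j) (h ++ [(i, j)]))

/-- The `n`-stage average expected payoff `γ_n(x₁, σ, τ)`. -/
def gamePayoff {X I J : Type*} [Fintype I] [Fintype J]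
    (q : X → I → J → X) (g : X → I → J → ℝ)
    (σ : List (I × J) → PMF I) (τ : List (I × J) → PMF J) (x₁ : X) (n : ℕ) : ℝ :=
  (1 / (n : ℝ)) * expPay q g σ τ n x₁ []

/-- Player 1 guarantees `w` in the game `Γ(x₁)`. -/
def Guarantees1 {X I J : Type*} [Fintype I] [Fintype J]
    (q : X → I → J → X) (g : X → I → J → ℝ) (x₁ : X) (w : ℝ) : Prop :=
  ∀ ε > (0 : ℝ), ∃ (σ : List (I × J) → PMF I) (N : ℕ),
    ∀ (τ : List (I × J) → PMF J), ∀ n ≥ N, w - ε ≤ gamePayoff q g σ τ x₁ n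

/-- Player 2 guarantees `w` in the game `Γ(x₁)`. -/
def Guarantees2 {X I J : Type*} [Fintype I] [Fintype J]
    (q : X → I → J → X) (g : X → I → J → ℝ) (x₁ : X) (w : ℝ) : Prop :=
  ∀ ε > (0 : ℝ), ∃ (τ : List (I × J) → PMF J) (N : ℕ),
    ∀ (σ : List (I × J) → PMF I), ∀ n ≥ N, gamePayoff q g σ τ x₁ n ≤ w + ε


/-- von Neumann's minimax theorem for matrix games. -/
theorem csg_minimax {I J : Type*} [Fintype I] [Nonempty I] [Fintype J] [Nonempty J]
    (A : I → J → ℝ) :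
    ∃ v : ℝ, (∃ x ∈ stdSimplex ℝ I, ∀ j, v ≤ ∑ i, x i * A i j) ∧
      (∃ y ∈ stdSimplex ℝ J, ∀ i, ∑ j, y j * A i j ≤ v) := by
  classical
  obtain ⟨b, hb, a, ha, hs⟩ := Sion.exists_isSaddlePointOn (E := J → ℝ) (F := I → ℝ)
    (X := stdSimplex ℝ J) (Y := stdSimplex ℝ I)
    (f := fun y x => ∑ i, ∑ j, x i * y j * A i j)
    ⟨_, single_mem_stdSimplex ℝ (Classical.arbitrary J)⟩ (convex_stdSimplex ℝ J)
    (isCompact_stdSimplex ℝ J)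
    (fun x _ => (Continuous.lowerSemicontinuous (by fun_prop)).lowerSemicontinuousOn _)
    (fun x _ => by
      apply ConvexOn.quasiconvexOn
      refine ⟨convex_stdSimplex ℝ J, fun y _ z _ c d _ _ _ => le_of_eq ?_⟩
      simp only [smul_eq_mul, Pi.add_apply, Pi.smul_apply, Finset.mul_sum, ← Finset.sum_add_distrib]
      refine Finset.sum_congr rfl fun i _ => Finset.sum_congr rfl fun j _ => by ring)
    (convex_stdSimplex ℝ I)
    ⟨_, single_mem_stdSimplex ℝ (Classical.arbitrary I)⟩
    (isCompact_stdSimplex ℝ I)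
    (fun x _ => (Continuous.upperSemicontinuous (by fun_prop)).upperSemicontinuousOn _)
    (fun x _ => by
      apply ConcaveOn.quasiconcaveOn
      refine ⟨convex_stdSimplex ℝ I, fun y _ z _ c d _ _ _ => le_of_eq ?_⟩
      simp only [smul_eq_mul, Pi.add_apply, Pi.smul_apply, Finset.mul_sum, ← Finset.sum_add_distrib]
      refine Finset.sum_congr rfl fun i _ => Finset.sum_congr rfl fun j _ => by ring)
  refine ⟨∑ i, ∑ j, a i * b j * A i j, ⟨a, ha, fun j => ?_⟩, ⟨b, hb, fun i => ?_⟩⟩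
  · have := hs (Pi.single j 1) (single_mem_stdSimplex ℝ j) a ha
    simpa [Pi.single_apply] using this
  · have := hs b hb (Pi.single i 1) (single_mem_stdSimplex ℝ i)
    simpa [Pi.single_apply] using this

/-- `v` is a discounted value function of the finite game for the discount factor `l`. -/
def IsDisc {S I J : Type*} [Fintype I] [Fintype J]
    (q : S → I → J → S) (g : S → I → J → ℝ) (l : ℝ) (v : S → ℝ) : Prop :=
  (∀ s, 0 ≤ v s ∧ v s ≤ 1) ∧
  (∀ s, ∃ x ∈ stdSimplex ℝ I, ∀ j, v s ≤ ∑ i, x i * (l * g s i j + (1 - l) * v (q s i j))) ∧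
  (∀ s, ∃ y ∈ stdSimplex ℝ J, ∀ i, ∑ j, y j * (l * g s i j + (1 - l) * v (q s i j)) ≤ v s)

/-- Weak duality. -/
theorem csg_dual {I J : Type*} [Fintype I] [Fintype J] {A B : I → J → ℝ} {a b c : ℝ}
    {x : I → ℝ} {y : J → ℝ} (hx : x ∈ stdSimplex ℝ I) (hy : y ∈ stdSimplex ℝ J)
    (h1 : ∀ j, a ≤ ∑ i, x i * A i j) (h2 : ∀ i, ∑ j, y j * B i j ≤ b)
    (h : ∀ i j, A i j ≤ B i j + c) : a ≤ b + c := by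
  have e1 : a ≤ ∑ j, y j * ∑ i, x i * A i j := by
    calc a = ∑ j, y j * a := by rw [← Finset.sum_mul, hy.2, one_mul]
      _ ≤ _ := Finset.sum_le_sum fun j _ => mul_le_mul_of_nonneg_left (h1 j) (hy.1 j)
  have e2 : ∑ i, x i * ∑ j, y j * B i j ≤ b := by
    calc _ ≤ ∑ i, x i * b :=
          Finset.sum_le_sum fun j _ => mul_le_mul_of_nonneg_left (h2 j) (hx.1 j)
      _ = b := by rw [← Finset.sum_mul, hx.2, one_mul]
  have e3 : ∑ j, y j * ∑ i, x i * A i j ≤ ∑ i, x i * ∑ j, y j * B i j + c := by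
    calc ∑ j, y j * ∑ i, x i * A i j = ∑ i, x i * ∑ j, y j * A i j := by
          simp only [Finset.mul_sum]
          rw [Finset.sum_comm]
          refine Finset.sum_congr rfl fun i _ => Finset.sum_congr rfl fun j _ => by ring
      _ ≤ ∑ i, x i * ((∑ j, y j * B i j) + c) := by
          refine Finset.sum_le_sum fun i _ => mul_le_mul_of_nonneg_left ?_ (hx.1 i)
          calc ∑ j, y j * A i j ≤ ∑ j, y j * (B i j + c) :=
                Finset.sum_le_sum fun j _ => mul_le_mul_of_nonneg_left (h i j) (hy.1 j)
            _ = (∑ j, y j * B i j) + c := by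
                simp only [mul_add, Finset.sum_add_distrib]
                rw [← Finset.sum_mul, hy.2, one_mul]
      _ = _ := by
          simp only [mul_add, Finset.sum_add_distrib]
          rw [← Finset.sum_mul, hx.2, one_mul]
  linarith

theorem csg_disc_exists {S I J : Type*} [Fintype S] [Fintype I] [Nonempty I] [Fintype J]
    [Nonempty J] (q : S → I → J → S) (g : S → I → J → ℝ)
    (hg : ∀ s i j, g s i j ∈ Set.Icc (0 : ℝ) 1) (l : ℝ) (h0 : 0 < l) (h1 : l < 1) :
    ∃ v, IsDisc q g l v := by
  classical
  choose val hx hy using fun A : I → J → ℝ => csg_minimax A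
  let Φ : (S → ℝ) → (S → ℝ) := fun w s => val fun i j => l * g s i j + (1 - l) * w (q s i j)
  have hΦ : ContractingWith (Real.toNNReal (1 - l)) Φ := by
    refine ⟨by rw [Real.toNNReal_lt_one]; linarith, LipschitzWith.of_dist_le_mul fun w w' => ?_⟩
    rw [Real.coe_toNNReal _ (by linarith)]
    have key : ∀ (w w' : S → ℝ) s, Φ w s ≤ Φ w' s + (1 - l) * dist w w' := by
      intro w w' s
      obtain ⟨x, hxs, hx1⟩ := hx fun i j => l * g s i j + (1 - l) * w (q s i j)
      obtain ⟨y, hys, hy1⟩ := hy fun i j => l * g s i j + (1 - l) * w' (q s i j)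
      refine csg_dual hxs hys hx1 hy1 fun i j => ?_
      have := dist_le_pi_dist w w' (q s i j)
      rw [Real.dist_eq] at this
      have := (abs_le.1 this).2
      nlinarith
    rw [dist_pi_le_iff (by have := dist_nonneg (x := w) (y := w'); nlinarith)]
    intro s
    rw [Real.dist_eq, abs_le]
    have a1 := key w w' s
    have a2 := key w' w s
    rw [dist_comm w' w] at a2
    constructor <;> linarith
  let v := ContractingWith.fixedPoint Φ hΦ
  have hv : ∀ s, v s = val fun i j => l * g s i j + (1 - l) * v (q s i j) := fun s =>
    (congrFun hΦ.fixedPoint_isFixedPt s).symm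
  have hX : ∀ s, ∃ x ∈ stdSimplex ℝ I, ∀ j,
      v s ≤ ∑ i, x i * (l * g s i j + (1 - l) * v (q s i j)) := by
    intro s; rw [hv s]; exact hx _
  have hY : ∀ s, ∃ y ∈ stdSimplex ℝ J, ∀ i,
      ∑ j, y j * (l * g s i j + (1 - l) * v (q s i j)) ≤ v s := by
    intro s; rw [hv s]; exact hy _
  refine ⟨v, fun s => ?_, hX, hY⟩
  have : Nonempty S := ⟨s⟩
  obtain ⟨sM, hM⟩ := Finite.exists_max v
  obtain ⟨sm, hm⟩ := Finite.exists_min v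
  constructor
  · refine le_trans ?_ (hm s)
    obtain ⟨y, hys, hy1⟩ := hY sm
    have := hy1 (Classical.arbitrary I)
    have h2 : ∑ j, y j * ((1 - l) * v sm) ≤
      ∑ j, y j * (l * g sm (Classical.arbitrary I) j + (1 - l) * v (q sm (Classical.arbitrary I) j)) := by
      refine Finset.sum_le_sum fun j _ => mul_le_mul_of_nonneg_left ?_ (hys.1 j)
      have := hm (q sm (Classical.arbitrary I) j)
      have := (hg sm (Classical.arbitrary I) j).1
      nlinarith
    rw [← Finset.sum_mul, hys.2] at h2
    nlinarith
  · refine le_trans (hM s) ?_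
    obtain ⟨y, hys, hy1⟩ := hX sM
    have := hy1 (Classical.arbitrary J)
    have h2 : ∑ i, y i * (l * g sM i (Classical.arbitrary J) + (1 - l) * v (q sM i (Classical.arbitrary J))) ≤ ∑ j, y j * (l + (1 - l) * v sM)
       := by
      refine Finset.sum_le_sum fun j _ => mul_le_mul_of_nonneg_left ?_ (hys.1 j)
      have := hM (q sM j (Classical.arbitrary J))
      have := (hg sM j (Classical.arbitrary J)).2
      nlinarith
    rw [← Finset.sum_mul, hys.2] at h2
    nlinarith

theorem csg_disc_lip {S I J : Type*} [Fintype S] [Fintype I] [Fintype J]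
    (q : S → I → J → S) (g : S → I → J → ℝ)
    (hg : ∀ s i j, g s i j ∈ Set.Icc (0 : ℝ) 1) {l m : ℝ} (h0 : 0 < l) (h1 : l < 1)
    {v w : S → ℝ} (hv : IsDisc q g l v) (hw : IsDisc q g m w) (s : S) :
    |v s - w s| ≤ |l - m| / l := by
  have : Nonempty S := ⟨s⟩
  have hb : ∀ s i j, |g s i j - w (q s i j)| ≤ 1 := by
    intro s i j
    have a := hg s i j
    have b := hw.1 (q s i j)
    rw [abs_le]; constructor <;> linarith [a.1, a.2]
  have hb' : ∀ s i j, |(l - m) * (g s i j - w (q s i j))| ≤ |l - m| := by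
    intro s i j
    rw [abs_mul]
    exact mul_le_of_le_one_right (abs_nonneg _) (hb s i j)
  have A : v s - w s ≤ |l - m| / l := by
    obtain ⟨t, ht⟩ := Finite.exists_max fun s => v s - w s
    refine (ht s).trans ?_
    obtain ⟨x, hx, hx1⟩ := hv.2.1 t
    obtain ⟨y, hy, hy1⟩ := hw.2.2 t
    have := csg_dual (c := |l - m| + (1 - l) * (v t - w t)) hx hy hx1 hy1 fun i j => by
      have e1 := ht (q t i j)
      have e2 := (abs_le.1 (hb' t i j)).2
      nlinarith
    rw [le_div_iff₀ h0]
    linarith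
  have B : w s - v s ≤ |l - m| / l := by
    obtain ⟨t, ht⟩ := Finite.exists_max fun s => w s - v s
    refine (ht s).trans ?_
    obtain ⟨x, hx, hx1⟩ := hw.2.1 t
    obtain ⟨y, hy, hy1⟩ := hv.2.2 t
    have := csg_dual (c := |l - m| + (1 - l) * (w t - v t)) hx hy hx1 hy1 fun i j => by
      have e1 := ht (q t i j)
      have e2 := (abs_le.1 (hb' t i j)).1
      nlinarith
    rw [le_div_iff₀ h0]
    linarith
  rw [abs_le]; constructor <;> linarith


/-- Families (indexed by `c`) of functions of `n` that are polynomials in `μ n` of degree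
bounded independently of `c`. -/
def polyFam (μ : ℕ → ℝ) : Subring (ℝ → ℕ → ℝ) where
  carrier := {f | ∃ d : ℕ, ∀ c, ∃ P : Polynomial ℝ, P.natDegree ≤ d ∧ ∀ n, f c n = P.eval (μ n)}
  zero_mem' := ⟨0, fun _ => ⟨0, by simp, by simp⟩⟩
  one_mem' := ⟨0, fun _ => ⟨1, by simp, by simp⟩⟩
  add_mem' := by
    rintro f g ⟨d, hd⟩ ⟨e, he⟩
    refine ⟨max d e, fun c => ?_⟩
    obtain ⟨P, hP, hP'⟩ := hd c
    obtain ⟨Q, hQ, hQ'⟩ := he c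
    exact ⟨P + Q, (Polynomial.natDegree_add_le _ _).trans (max_le_max hP hQ), fun n => by
      simp [hP', hQ']⟩
  mul_mem' := by
    rintro f g ⟨d, hd⟩ ⟨e, he⟩
    refine ⟨d + e, fun c => ?_⟩
    obtain ⟨P, hP, hP'⟩ := hd c
    obtain ⟨Q, hQ, hQ'⟩ := he c
    exact ⟨P * Q, Polynomial.natDegree_mul_le.trans (add_le_add hP hQ), fun n => by
      simp [hP', hQ']⟩
  neg_mem' := by
    rintro f ⟨d, hd⟩
    refine ⟨d, fun c => ?_⟩
    obtain ⟨P, hP, hP'⟩ := hd c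
    exact ⟨-P, by simpa using hP, fun n => by simp [hP']⟩

theorem polyFam_const (μ : ℕ → ℝ) (a : ℝ → ℝ) : (fun c _ => a c) ∈ polyFam μ :=
  ⟨0, fun c => ⟨Polynomial.C (a c), by simp, by simp⟩⟩

theorem polyFam_mu (μ : ℕ → ℝ) : (fun _ n => μ n) ∈ polyFam μ :=
  ⟨1, fun c => ⟨Polynomial.X, by simp, by simp⟩⟩

open Classical in
/-- Families (indexed by `c`) of predicates on `ℕ` that change truth value a bounded number of
times. -/
def Tame (A : ℝ → ℕ → Prop) : Prop :=
  ∃ K : ℕ, ∀ c N, ((Finset.range N).filter fun n => ¬ (A c n ↔ A c (n + 1))).card ≤ K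

theorem Tame.congr {A B : ℝ → ℕ → Prop} (h : ∀ c n, A c n ↔ B c n) (hA : Tame A) : Tame B := by
  have : A = B := by funext c n; exact propext (h c n)
  rwa [← this]

theorem Tame.not {A : ℝ → ℕ → Prop} (hA : Tame A) : Tame fun c n => ¬ A c n := by
  classical
  obtain ⟨K, hK⟩ := hA
  refine ⟨K, fun c N => le_trans (Finset.card_le_card ?_) (hK c N)⟩
  intro n
  simp only [Finset.mem_filter]
  tauto

theorem Tame.and {A B : ℝ → ℕ → Prop} (hA : Tame A) (hB : Tame B) :
    Tame fun c n => A c n ∧ B c n := by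
  classical
  obtain ⟨K, hK⟩ := hA
  obtain ⟨L, hL⟩ := hB
  refine ⟨K + L, fun c N => le_trans (Finset.card_le_card ?_)
    ((Finset.card_union_le _ _).trans (add_le_add (hK c N) (hL c N)))⟩
  intro n
  simp only [Finset.mem_filter, Finset.mem_union]
  tauto

theorem Tame.true : Tame fun _ _ => True := ⟨0, fun c N => by simp⟩

theorem Tame.all {R : Type*} [Finite R] {A : R → ℝ → ℕ → Prop} (hA : ∀ r, Tame (A r)) :
    Tame fun c n => ∀ r, A r c n := by
  classical
  cases nonempty_fintype R
  have : ∀ s : Finset R, Tame fun c n => ∀ r ∈ s, A r c n := by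
    intro s
    induction s using Finset.induction_on with
    | empty => simpa using Tame.true
    | insert a s _ ih =>
      refine Tame.congr (fun c n => ?_) ((hA a).and ih)
      simp
  refine Tame.congr (fun c n => ?_) (this Finset.univ)
  simp

theorem Tame.pos {μ : ℕ → ℝ} (hμ : StrictAnti μ) {f : ℝ → ℕ → ℝ} (hf : f ∈ polyFam μ) :
    Tame fun c n => 0 < f c n := by
  classical
  obtain ⟨d, hd⟩ := hf
  refine ⟨d + d, fun c N => ?_⟩
  obtain ⟨P, hP, hP'⟩ := hd c
  simp only [hP']
  by_cases h0 : P = 0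
  · simp [h0]
  have hroots : P.roots.toFinset.card ≤ d :=
    (Multiset.toFinset_card_le _).trans ((Polynomial.card_roots' P).trans hP)
  have hc : Continuous fun x => P.eval x := P.continuous
  have h1 : ∀ n, 0 < P.eval (μ n) → ¬ 0 < P.eval (μ (n + 1)) →
      ∃ r, P.IsRoot r ∧ μ (n + 1) ≤ r ∧ r < μ n := by
    intro n a b
    have hle : μ (n + 1) ≤ μ n := (hμ (Nat.lt_succ_self n)).le
    obtain ⟨r, hr, hr'⟩ := intermediate_value_Icc hle hc.continuousOn ⟨not_lt.1 b, a.le⟩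
    refine ⟨r, hr', hr.1, lt_of_le_of_ne hr.2 ?_⟩
    rintro rfl
    simp only at hr'
    linarith
  have h2 : ∀ n, ¬ 0 < P.eval (μ n) → 0 < P.eval (μ (n + 1)) →
      ∃ r, P.IsRoot r ∧ μ (n + 1) < r ∧ r ≤ μ n := by
    intro n a b
    have hle : μ (n + 1) ≤ μ n := (hμ (Nat.lt_succ_self n)).le
    obtain ⟨r, hr, hr'⟩ := intermediate_value_Icc' hle hc.continuousOn ⟨not_lt.1 a, b.le⟩
    refine ⟨r, hr', lt_of_le_of_ne hr.1 ?_, hr.2⟩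
    rintro rfl
    simp only at hr'
    linarith
  choose! r1 hr1 using h1
  choose! r2 hr2 using h2
  have c1 : ((Finset.range N).filter fun n => 0 < P.eval (μ n) ∧ ¬ 0 < P.eval (μ (n + 1))).card
      ≤ d := by
    refine le_trans (Finset.card_le_card_of_injOn r1 ?_ ?_) hroots
    · intro n hn
      simp only [Finset.coe_filter, Set.mem_ofPred_eq] at hn
      simpa [h0] using (hr1 n hn.2.1 hn.2.2).1
    · have key : ∀ n m, n < m → (0 < P.eval (μ n) ∧ ¬ 0 < P.eval (μ (n + 1))) →
        (0 < P.eval (μ m) ∧ ¬ 0 < P.eval (μ (m + 1))) → r1 n ≠ r1 m := by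
        intro n m hnm hn hm
        have a := (hr1 n hn.1 hn.2).2.1
        have b := (hr1 m hm.1 hm.2).2.2
        have := hμ.antitone (Nat.succ_le_of_lt hnm)
        simp only [Nat.succ_eq_add_one] at this
        intro h; linarith
      intro n hn m hm h
      simp only [Finset.coe_filter, Set.mem_ofPred_eq] at hn hm
      rcases lt_trichotomy n m with h' | h' | h'
      · exact absurd h (key n m h' hn.2 hm.2)
      · exact h'
      · exact absurd h.symm (key m n h' hm.2 hn.2)
  have c2 : ((Finset.range N).filter fun n => ¬ 0 < P.eval (μ n) ∧ 0 < P.eval (μ (n + 1))).card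
      ≤ d := by
    refine le_trans (Finset.card_le_card_of_injOn r2 ?_ ?_) hroots
    · intro n hn
      simp only [Finset.coe_filter, Set.mem_ofPred_eq] at hn
      simpa [h0] using (hr2 n hn.2.1 hn.2.2).1
    · have key : ∀ n m, n < m → (¬ 0 < P.eval (μ n) ∧ 0 < P.eval (μ (n + 1))) →
        (¬ 0 < P.eval (μ m) ∧ 0 < P.eval (μ (m + 1))) → r2 n ≠ r2 m := by
        intro n m hnm hn hm
        have a := (hr2 n hn.1 hn.2).2.1
        have b := (hr2 m hm.1 hm.2).2.2
        have := hμ.antitone (Nat.succ_le_of_lt hnm)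
        simp only [Nat.succ_eq_add_one] at this
        intro h; linarith
      intro n hn m hm h
      simp only [Finset.coe_filter, Set.mem_ofPred_eq] at hn hm
      rcases lt_trichotomy n m with h' | h' | h'
      · exact absurd h (key n m h' hn.2 hm.2)
      · exact h'
      · exact absurd h.symm (key m n h' hm.2 hn.2)
  refine le_trans (Finset.card_le_card ?_)
    ((Finset.card_union_le _ _).trans (add_le_add c1 c2))
  intro n
  simp only [Finset.mem_filter, Finset.mem_union]
  tauto

/-- One step of Fourier-Motzkin elimination. -/
theorem fm_step {R : Type*} [Finite R] (G : R → Prop) (a b : R → ℝ) :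
    (∃ t : ℝ, ∀ r, G r → 0 < a r * t + b r) ↔
      (∀ r, G r ∧ ¬ 0 < a r ∧ ¬ 0 < - a r → 0 < b r) ∧
      (∀ p : R × R, G p.1 ∧ G p.2 ∧ 0 < a p.1 ∧ 0 < - a p.2 →
        0 < a p.1 * b p.2 + (- a p.2) * b p.1) := by
  classical
  cases nonempty_fintype R
  constructor
  · rintro ⟨t, ht⟩
    constructor
    · rintro r ⟨hr, h1, h2⟩
      have h0 : a r = 0 := by linarith
      simpa [h0] using ht r hr
    · rintro ⟨r, r'⟩ ⟨hr, hr', h1, h2⟩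
      have e1 := mul_pos h2 (ht r hr)
      have e2 := mul_pos h1 (ht r' hr')
      simp only at *
      nlinarith
  · rintro ⟨h0, h1⟩
    obtain ⟨t, ht, ht'⟩ := Order.exists_between_finsets
      ((Finset.univ.filter fun r => G r ∧ 0 < a r).image fun r => - b r / a r)
      ((Finset.univ.filter fun r => G r ∧ 0 < - a r).image fun r => b r / (- a r)) (by
        intro x hx y hy
        simp only [Finset.mem_image, Finset.mem_filter, Finset.mem_univ, true_and] at hx hy
        obtain ⟨r, ⟨hr, hr'⟩, rfl⟩ := hx
        obtain ⟨p, ⟨hp, hp'⟩, rfl⟩ := hy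
        rw [div_lt_div_iff₀ hr' hp']
        have := h1 (r, p) ⟨hr, hp, hr', hp'⟩
        simp only at this
        nlinarith)
    refine ⟨t, fun r hr => ?_⟩
    rcases lt_trichotomy (a r) 0 with h | h | h
    · have := ht' (b r / (- a r)) (Finset.mem_image_of_mem _ (by simp [hr, h]))
      rw [lt_div_iff₀ (by linarith)] at this
      linarith
    · have := h0 r ⟨hr, by simp [h], by simp [h]⟩
      simpa [h] using this
    · have := ht (- b r / a r) (Finset.mem_image_of_mem _ (by simp [hr, h]))
      rw [div_lt_iff₀ (by linarith)] at this
      linarith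

theorem fm_tame.{u} {μ : ℕ → ℝ} (hμ : StrictAnti μ) (k : ℕ) :
    ∀ {R : Type u} [Finite R] (G : R → ℝ → ℕ → Prop) (_ : ∀ r, Tame (G r))
      (a : R → Fin k → ℝ → ℕ → ℝ) (_ : ∀ r l, a r l ∈ polyFam μ),
      Tame fun c n => ∃ x : Fin k → ℝ, ∀ r, G r c n → 0 < ∑ l, a r l c n * x l := by
  induction k with
  | zero =>
    intro R _ G hG a ha
    refine Tame.congr (fun c n => ?_) (Tame.all fun r => (hG r).not)
    simp
  | succ k ih =>
    intro R _ G hG a ha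
    let R' := R ⊕ (R × R)
    let G' : R' → ℝ → ℕ → Prop := Sum.elim
      (fun r c n => G r c n ∧ ¬ 0 < a r 0 c n ∧ ¬ 0 < (- a r 0) c n)
      (fun p c n => G p.1 c n ∧ G p.2 c n ∧ 0 < a p.1 0 c n ∧ 0 < (- a p.2 0) c n)
    let a' : R' → Fin k → ℝ → ℕ → ℝ := Sum.elim
      (fun r l => a r l.succ)
      (fun p l => a p.1 0 * a p.2 l.succ + (- a p.2 0) * a p.1 l.succ)
    have hG' : ∀ r, Tame (G' r) := by
      rintro (r | p)
      · exact (hG r).and ((Tame.pos hμ (ha r 0)).not.and (Tame.pos hμ (neg_mem (ha r 0))).not)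
      · exact (hG _).and ((hG _).and ((Tame.pos hμ (ha _ 0)).and (Tame.pos hμ (neg_mem (ha _ 0)))))
    have ha' : ∀ r l, a' r l ∈ polyFam μ := by
      rintro (r | p) l
      · exact ha r _
      · exact add_mem (mul_mem (ha _ _) (ha _ _)) (mul_mem (neg_mem (ha _ _)) (ha _ _))
    refine Tame.congr (fun c n => ?_) (ih G' hG' a' ha')
    have e : (∃ x : Fin (k + 1) → ℝ, ∀ r, G r c n → 0 < ∑ l, a r l c n * x l) ↔
        ∃ y : Fin k → ℝ, ∃ t : ℝ, ∀ r, G r c n →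
          0 < a r 0 c n * t + ∑ l : Fin k, a r l.succ c n * y l := by
      constructor
      · rintro ⟨x, hx⟩
        exact ⟨fun l => x l.succ, x 0, fun r hr => by simpa [Fin.sum_univ_succ] using hx r hr⟩
      · rintro ⟨y, t, h⟩
        exact ⟨Fin.cons t y, fun r hr => by simpa [Fin.sum_univ_succ] using h r hr⟩
    rw [e]
    refine exists_congr fun y => ?_
    rw [fm_step]
    simp only [R', Sum.forall, G', a', Sum.elim_inl, Sum.elim_inr]
    refine and_congr Iff.rfl (forall_congr' fun p => imp_congr Iff.rfl ?_)
    have : ∑ l, (a p.1 0 * a p.2 l.succ + (- a p.2 0) * a p.1 l.succ) c n * y l =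
      a p.1 0 c n * ∑ l : Fin k, a p.2 l.succ c n * y l +
        (- a p.2 0 c n) * ∑ l : Fin k, a p.1 l.succ c n * y l := by
      simp only [Finset.mul_sum, ← Finset.sum_add_distrib]
      refine Finset.sum_congr rfl fun l _ => ?_
      simp only [Pi.add_apply, Pi.mul_apply, Pi.neg_apply]
      ring
    rw [this]

/-- Total variation bound from the bounded number of level crossings. -/
theorem tame_variation {f : ℕ → ℝ} (hf : ∀ n, 0 ≤ f n ∧ f n ≤ 1) (h : Tame fun c n => c < f n) :
    ∃ K : ℝ, ∀ N, ∑ n ∈ Finset.range N, |f n - f (n + 1)| ≤ K := by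
  classical
  obtain ⟨K, hK⟩ := h
  refine ⟨K, fun N => ?_⟩
  let A : ℕ → Set ℝ := fun n => Set.Ico (min (f n) (f (n + 1))) (max (f n) (f (n + 1)))
  have hvol : ∀ n, MeasureTheory.volume (A n) = ENNReal.ofReal |f n - f (n + 1)| := by
    intro n
    simp only [A, Real.volume_Ico, max_sub_min_eq_abs']
  have h1 : ENNReal.ofReal (∑ n ∈ Finset.range N, |f n - f (n + 1)|) ≤ K := by
    rw [ENNReal.ofReal_sum_of_nonneg (fun _ _ => abs_nonneg _)]
    calc ∑ n ∈ Finset.range N, ENNReal.ofReal |f n - f (n + 1)|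
        = ∑ n ∈ Finset.range N, ∫⁻ c : ℝ, (A n).indicator 1 c := by
          refine Finset.sum_congr rfl fun n _ => ?_
          rw [← hvol n, MeasureTheory.lintegral_indicator_one measurableSet_Ico]
      _ = ∫⁻ c : ℝ, ∑ n ∈ Finset.range N, (A n).indicator 1 c := by
          rw [MeasureTheory.lintegral_finsetSum]
          intro n _
          exact measurable_one.indicator measurableSet_Ico
      _ ≤ ∫⁻ c : ℝ, (Set.Icc (0 : ℝ) 1).indicator (fun _ => (K : ENNReal)) c := by
          refine MeasureTheory.lintegral_mono fun c => ?_
          by_cases hc : c ∈ Set.Icc (0 : ℝ) 1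
          · rw [Set.indicator_of_mem hc]
            calc ∑ n ∈ Finset.range N, (A n).indicator (1 : ℝ → ENNReal) c
                = ∑ n ∈ Finset.range N, if ¬ (c < f n ↔ c < f (n + 1)) then 1 else 0 := by
                  refine Finset.sum_congr rfl fun n _ => ?_
                  rw [Set.indicator_apply]
                  refine if_congr ?_ rfl rfl
                  simp only [A, Set.mem_Ico, min_le_iff, lt_max_iff]
                  rcases lt_or_ge c (f n) with a | a <;> rcases lt_or_ge c (f (n + 1)) with b | b <;>
                    simp [a, b, not_lt.2, not_le.2]
              _ ≤ K := by
                  rw [Finset.sum_boole]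
                  exact_mod_cast hK c N
          · have : ∑ n ∈ Finset.range N, (A n).indicator (1 : ℝ → ENNReal) c = 0 := by
              refine Finset.sum_eq_zero fun n _ => Set.indicator_of_notMem ?_ _
              intro hn
              apply hc
              simp only [A, Set.mem_Ico, min_le_iff, lt_max_iff] at hn
              constructor
              · rcases hn.1 with h | h
                · exact (hf n).1.trans h
                · exact (hf _).1.trans h
              · rcases hn.2 with h | h
                · exact h.le.trans (hf n).2
                · exact h.le.trans (hf _).2
            rw [this]; exact zero_le
      _ = K := by
          rw [MeasureTheory.lintegral_indicator_const measurableSet_Icc]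
          simp
  have := (ENNReal.ofReal_le_iff_le_toReal (by simp)).1 h1
  simpa using this


theorem mdpMat_nonneg {S A : Type*} [Fintype S] [Fintype A] {p : S → A → ℝ} (hp : ∀ s, p s ∈ stdSimplex ℝ A) (qs : S → A → S) {t : ℝ}
    (h0 : 0 ≤ t) (h1 : t < 1) {u : S → ℝ} (hu : ∀ s, 0 ≤ u s - t * ∑ a, p s a * u (qs s a))
    (s : S) : 0 ≤ u s := by
  have : Nonempty S := ⟨s⟩
  obtain ⟨m, hm⟩ := Finite.exists_min u
  refine le_trans ?_ (hm s)
  have h2 : ∑ a, p m a * u m ≤ ∑ a, p m a * u (qs m a) :=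
    Finset.sum_le_sum fun a _ => mul_le_mul_of_nonneg_left (hm _) ((hp m).1 a)
  rw [← Finset.sum_mul, (hp m).2, one_mul] at h2
  have := hu m
  nlinarith

section MDP
variable {S A : Type*} [Fintype S] [DecidableEq S] [Fintype A]

/-- The matrix `1 - t Q` where `Q` is the transition matrix. -/
def mdpMat (p : S → A → ℝ) (qs : S → A → S) (t : ℝ) : Matrix S S ℝ :=
  Matrix.of fun s s' => (if s = s' then 1 else 0) - t * ∑ a, p s a * (if qs s a = s' then 1 else 0)

theorem mdpMat_mulVec (p : S → A → ℝ) (qs : S → A → S) (t : ℝ) (u : S → ℝ) (s : S) :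
    (mdpMat p qs t).mulVec u s = u s - t * ∑ a, p s a * u (qs s a) := by
  simp only [Matrix.mulVec, dotProduct, mdpMat, Matrix.of_apply, sub_mul, Finset.sum_sub_distrib]
  congr 1
  · simp
  · simp only [mul_assoc, Finset.sum_mul, ← Finset.mul_sum]
    congr 1
    rw [Finset.sum_comm]
    refine Finset.sum_congr rfl fun a _ => ?_
    simp

theorem mdpMat_det_ne {p : S → A → ℝ} (hp : ∀ s, p s ∈ stdSimplex ℝ A) (qs : S → A → S) {t : ℝ}
    (h0 : 0 ≤ t) (h1 : t < 1) : (mdpMat p qs t).det ≠ 0 := by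
  intro h
  obtain ⟨u, hu0, hu⟩ := Matrix.exists_mulVec_eq_zero_iff.2 h
  apply hu0
  have e : ∀ s, u s - t * ∑ a, p s a * u (qs s a) = 0 := fun s => by
    rw [← mdpMat_mulVec, hu]; rfl
  funext s
  apply le_antisymm
  · have := mdpMat_nonneg hp qs h0 h1 (u := -u) (fun s => by
      have := e s
      simp only [Pi.neg_apply, mul_neg, Finset.sum_neg_distrib]
      linarith) s
    simpa using this
  · exact mdpMat_nonneg hp qs h0 h1 (fun s => (e s).ge) s

theorem mdpMat_det_pos {p : S → A → ℝ} (hp : ∀ s, p s ∈ stdSimplex ℝ A) (qs : S → A → S) {t : ℝ}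
    (h0 : 0 ≤ t) (h1 : t < 1) : 0 < (mdpMat p qs t).det := by
  by_contra hneg
  have hc : Continuous fun t => (mdpMat p qs t).det := by
    apply Continuous.matrix_det
    refine continuous_matrix fun i j => ?_
    simp only [mdpMat, Matrix.of_apply]
    fun_prop
  have e0 : (mdpMat p qs 0).det = 1 := by
    have : mdpMat p qs 0 = 1 := by
      ext i j; simp [mdpMat, Matrix.one_apply]
    rw [this, Matrix.det_one]
  obtain ⟨r, hr, hr'⟩ := intermediate_value_Icc' h0 hc.continuousOn
    (show (0:ℝ) ∈ _ from ⟨not_lt.1 hneg, by rw [e0]; norm_num⟩)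
  exact mdpMat_det_ne hp qs hr.1 (hr.2.trans_lt h1) hr'

/-- Rows of the auxiliary matrix. -/
def mdpRow (l c : ℝ) (s0 s t : S) (x : ℝ) (s' : S) : ℝ :=
  if s' = s0 then
    l * x - c * ((if s = s0 then 1 else 0) - (1 - l) * (if t = s0 then 1 else 0))
  else (if s = s' then 1 else 0) - (1 - l) * (if t = s' then 1 else 0)

theorem mdp_key {p : S → A → ℝ} (hp : ∀ s, p s ∈ stdSimplex ℝ A) (qs : S → A → S)
    (gs : S → A → ℝ) {l : ℝ} (h0 : 0 < l) (h1 : l < 1) (s0 : S) :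
    ∃ D > 0, ∃ w : S → ℝ, (∀ s, w s = ∑ a, p s a * (l * gs s a + (1 - l) * w (qs s a))) ∧
      ∀ c, ∑ α : S → A, (∏ s, p s (α s)) *
        (Matrix.of fun s => mdpRow l c s0 s (qs s (α s)) (gs s (α s))).det = D * (w s0 - c) := by
  classical
  set M := mdpMat p qs (1 - l) with hM
  have hD : 0 < M.det := mdpMat_det_pos hp qs (by linarith) (by linarith)
  have hU : IsUnit M.det := hD.ne'.isUnit
  let r : S → ℝ := fun s => ∑ a, p s a * (l * gs s a)
  let w : S → ℝ := M⁻¹.mulVec r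
  have hw : M.mulVec w = r := by
    simp only [w, Matrix.mulVec_mulVec, Matrix.mul_nonsing_inv M hU, Matrix.one_mulVec]
  refine ⟨M.det, hD, w, fun s => ?_, fun c => ?_⟩
  · have := congrFun hw s
    rw [hM, mdpMat_mulVec] at this
    simp only [mul_add, Finset.sum_add_distrib]
    have e : ∑ a, p s a * ((1 - l) * w (qs s a)) = (1 - l) * ∑ a, p s a * w (qs s a) := by
      rw [Finset.mul_sum]; exact Finset.sum_congr rfl fun a _ => by ring
    simp only [r] at this
    rw [e]; linarith
  · have e1 : ∑ α : S → A, (∏ s, p s (α s)) *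
        (Matrix.of fun s => mdpRow l c s0 s (qs s (α s)) (gs s (α s))).det =
        (Matrix.of fun s => ∑ a, p s a • mdpRow l c s0 s (qs s a) (gs s a)).det := by
      have := (Matrix.detRowAlternating (R := ℝ) (n := S)).toMultilinearMap.map_sum
        (fun s a => p s a • mdpRow l c s0 s (qs s a) (gs s a))
      simp only [AlternatingMap.coe_multilinearMap] at this
      refine Eq.trans ?_ this.symm
      refine Finset.sum_congr rfl fun α _ => ?_
      have := (Matrix.detRowAlternating (R := ℝ) (n := S)).toMultilinearMap.map_smul_univ
        (fun s => p s (α s)) (fun s => mdpRow l c s0 s (qs s (α s)) (gs s (α s)))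
      simp only [AlternatingMap.coe_multilinearMap, smul_eq_mul] at this
      exact this.symm
    have e2 : (Matrix.of fun s => ∑ a, p s a • mdpRow l c s0 s (qs s a) (gs s a)) =
        M.updateCol s0 (M.mulVec (w - c • Pi.single s0 1)) := by
      ext s s'
      rw [Matrix.mulVec_sub, hw, Matrix.mulVec_smul, Matrix.mulVec_single_one, Matrix.updateCol_apply]
      simp only [Matrix.of_apply, Finset.sum_apply, Pi.smul_apply, smul_eq_mul, mdpRow, Pi.sub_apply,
        Matrix.col_apply, hM, mdpMat, r]
      have hh : ∀ t', ∑ a, p s a * ((if s = t' then 1 else 0) -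
          (1 - l) * (if qs s a = t' then 1 else 0)) = (if s = t' then (1 : ℝ) else 0) -
          (1 - l) * ∑ a, p s a * (if qs s a = t' then 1 else 0) := by
        intro t'
        simp only [mul_sub, Finset.sum_sub_distrib, ← Finset.sum_mul, (hp s).2, one_mul]
        rw [Finset.mul_sum]
        congr 1
        exact Finset.sum_congr rfl fun a _ => by ring
      by_cases hs : s' = s0
      · simp only [if_pos hs]
        rw [← hh, Finset.mul_sum, ← Finset.sum_sub_distrib]
        exact Finset.sum_congr rfl fun a _ => by ring
      · simp only [if_neg hs]
        exact hh s'
    have e3 : (M.updateCol s0 (M.mulVec (w - c • Pi.single s0 1))).det = M.det * (w s0 - c) := by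
      rw [← Matrix.cramer_apply, Matrix.cramer_eq_adjugate_mulVec, Matrix.mulVec_mulVec,
        Matrix.adjugate_mul, Matrix.smul_mulVec, Matrix.one_mulVec]
      simp
    rw [e1, e2, e3]

end MDP


theorem mdpRow_mem {S : Type*} [DecidableEq S] (μ : ℕ → ℝ) (s0 s t : S) (x : ℝ) (s' : S) :
    (fun c n => mdpRow (μ n) c s0 s t x s') ∈ polyFam μ := by
  have hm := polyFam_mu μ
  have hc := polyFam_const μ
  have h1 : ∀ (a b : ℝ), (fun (_ : ℝ) n => a - (1 - μ n) * b) ∈ polyFam μ := fun a b =>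
    sub_mem (hc fun _ => a) (mul_mem (sub_mem (one_mem _) hm) (hc fun _ => b))
  by_cases hs : s' = s0
  · simp only [mdpRow, if_pos hs]
    exact sub_mem (mul_mem hm (hc fun _ => x)) (mul_mem (hc fun c => c) (h1 _ _))
  · simp only [mdpRow, if_neg hs]
    exact h1 _ _

theorem mdpDet_mem {S : Type*} [Fintype S] [DecidableEq S] (μ : ℕ → ℝ) (s0 : S) (t : S → S)
    (x : S → ℝ) :
    (fun c n => (Matrix.of fun s => mdpRow (μ n) c s0 s (t s) (x s)).det) ∈ polyFam μ := by
  have : (fun c n => (Matrix.of fun s => mdpRow (μ n) c s0 s (t s) (x s)).det) =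
      ∑ σ : Equiv.Perm S, (fun (_ : ℝ) (_ : ℕ) => (((Equiv.Perm.sign σ : ℤˣ) : ℤ) : ℝ)) *
        ∏ i, fun c n => mdpRow (μ n) c s0 (σ i) (t (σ i)) (x (σ i)) i := by
    funext c n
    rw [Matrix.det_apply']
    simp [Finset.sum_apply, Finset.prod_apply]
  rw [this]
  exact sum_mem fun σ _ => mul_mem (polyFam_const μ _) (prod_mem fun i _ => mdpRow_mem _ _ _ _ _ _)

/-- The level sets of the discounted value are described by a linear system. -/
theorem disc_gt_iff {S I J : Type*} [Fintype S] [DecidableEq S] [Fintype I] [Fintype J]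
    (q : S → I → J → S) (g : S → I → J → ℝ) {l : ℝ} (h0 : 0 < l) (h1 : l < 1) {v : S → ℝ}
    (hv : IsDisc q g l v) (s0 : S) (c : ℝ) :
    c < v s0 ↔ ∃ z : (S → I) → ℝ, (∀ a, 0 < z a) ∧ ∀ b : S → J, 0 < ∑ a, z a *
      (Matrix.of fun s => mdpRow l c s0 s (q s (a s) (b s)) (g s (a s) (b s))).det := by
  classical
  set W : (S → I) → (S → J) → ℝ := fun a b =>
    (Matrix.of fun s => mdpRow l c s0 s (q s (a s) (b s)) (g s (a s) (b s))).det with hW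
  change c < v s0 ↔ ∃ z : (S → I) → ℝ, (∀ a, 0 < z a) ∧ ∀ b : S → J, 0 < ∑ a, z a * W a b
  constructor
  · intro hc
    choose x hx hx1 using hv.2.1
    have hpos : ∀ b : S → J, 0 < ∑ a : S → I, (∏ s, x s (a s)) * W a b := by
      intro b
      obtain ⟨D, hD, w, hw, hdet⟩ := mdp_key hx (fun s i => q s i (b s)) (fun s i => g s i (b s))
        h0 h1 s0
      rw [hW]
      simp only
      rw [hdet c]
      have : 0 ≤ (w - v) s0 := by
        refine mdpMat_nonneg hx (fun s i => q s i (b s)) (t := 1 - l) (by linarith) (by linarith)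
          (fun s => ?_) s0
        have e1 := hw s
        have e2 := hx1 s (b s)
        simp only [Pi.sub_apply, mul_sub, mul_add, Finset.sum_sub_distrib,
          Finset.sum_add_distrib] at e1 e2 ⊢
        have e3 : ∀ u : S → ℝ, ∑ i, x s i * ((1 - l) * u (q s i (b s))) =
          (1 - l) * ∑ i, x s i * u (q s i (b s)) := fun u => by
          rw [Finset.mul_sum]; exact Finset.sum_congr rfl fun _ _ => by ring
        rw [e3] at e1 e2
        linarith
      simp only [Pi.sub_apply] at this
      exact mul_pos hD (by linarith)
    have hev : ∀ᶠ δ in 𝓝[>] (0 : ℝ), ∀ b : S → J, 0 < ∑ a : S → I, ((∏ s, x s (a s)) + δ) * W a b := by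
      rw [eventually_all]
      intro b
      apply eventually_nhdsWithin_of_eventually_nhds
      have : Continuous fun δ : ℝ => ∑ a : S → I, ((∏ s, x s (a s)) + δ) * W a b := by fun_prop
      refine (this.tendsto 0).eventually (lt_mem_nhds ?_)
      simpa using hpos b
    obtain ⟨δ, hδ, hδ0⟩ := (hev.and self_mem_nhdsWithin).exists
    refine ⟨fun a => (∏ s, x s (a s)) + δ, fun a => ?_, hδ⟩
    have : 0 ≤ ∏ s, x s (a s) := Finset.prod_nonneg fun s _ => (hx s).1 _
    have : 0 < δ := hδ0
    linarith
  · rintro ⟨z, hz, hzW⟩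
    by_contra hc
    choose y hy hy1 using hv.2.2
    have hneg : ∀ a : S → I, ∑ b : S → J, (∏ s, y s (b s)) * W a b ≤ 0 := by
      intro a
      obtain ⟨D, hD, w, hw, hdet⟩ := mdp_key hy (fun s j => q s (a s) j) (fun s j => g s (a s) j)
        h0 h1 s0
      rw [hW]
      simp only
      rw [hdet c]
      have : 0 ≤ (v - w) s0 := by
        refine mdpMat_nonneg hy (fun s j => q s (a s) j) (t := 1 - l) (by linarith) (by linarith)
          (fun s => ?_) s0
        have e1 := hw s
        have e2 := hy1 s (a s)
        simp only [Pi.sub_apply, mul_sub, mul_add, Finset.sum_sub_distrib,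
          Finset.sum_add_distrib] at e1 e2 ⊢
        have e3 : ∀ u : S → ℝ, ∑ j, y s j * ((1 - l) * u (q s (a s) j)) =
          (1 - l) * ∑ j, y s j * u (q s (a s) j) := fun u => by
          rw [Finset.mul_sum]; exact Finset.sum_congr rfl fun _ _ => by ring
        rw [e3] at e1 e2
        linarith
      simp only [Pi.sub_apply] at this
      exact mul_nonpos_of_nonneg_of_nonpos hD.le (by linarith)
    have hsum : ∑ b : S → J, ∏ s, y s (b s) = 1 := by
      rw [← Fintype.prod_sum]
      exact Finset.prod_eq_one fun s _ => (hy s).2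
    have A1 : ∑ a, z a * ∑ b : S → J, (∏ s, y s (b s)) * W a b ≤ 0 :=
      Finset.sum_nonpos fun a _ => mul_nonpos_of_nonneg_of_nonpos (hz a).le (hneg a)
    have A2 : ∑ a, z a * ∑ b : S → J, (∏ s, y s (b s)) * W a b =
        ∑ b : S → J, (∏ s, y s (b s)) * ∑ a, z a * W a b := by
      simp only [Finset.mul_sum]
      rw [Finset.sum_comm]
      exact Finset.sum_congr rfl fun _ _ => Finset.sum_congr rfl fun _ _ => by ring
    have hnn : ∀ b : S → J, 0 ≤ ∏ s, y s (b s) := fun b => Finset.prod_nonneg fun s _ => (hy s).1 _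
    obtain ⟨b, _, hb⟩ : ∃ b ∈ (Finset.univ : Finset (S → J)), 0 < ∏ s, y s (b s) := by
      by_contra! h
      have := Finset.sum_nonpos h
      linarith
    have A3 : 0 < ∑ b : S → J, (∏ s, y s (b s)) * ∑ a, z a * W a b :=
      Finset.sum_pos' (fun b _ => mul_nonneg (hnn b) (hzW b).le)
        ⟨b, Finset.mem_univ _, mul_pos hb (hzW b)⟩
    linarith

theorem disc_variation {S I J : Type*} [Fintype S] [Fintype I] [Fintype J]
    (q : S → I → J → S) (g : S → I → J → ℝ) {μ : ℕ → ℝ} (hμ : StrictAnti μ)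
    (h0 : ∀ n, 0 < μ n) (h1 : ∀ n, μ n < 1) {v : ℕ → S → ℝ}
    (hv : ∀ n, IsDisc q g (μ n) (v n)) (s0 : S) :
    ∃ K : ℝ, ∀ N, ∑ n ∈ Finset.range N, |v n s0 - v (n + 1) s0| ≤ K := by
  classical
  refine tame_variation (fun n => (hv n).1 s0) ?_
  let e := Fintype.equivFin (S → I)
  let k := Fintype.card (S → I)
  let a : Fin k ⊕ (S → J) → Fin k → ℝ → ℕ → ℝ := Sum.elim
    (fun r l => if l = r then 1 else 0)
    (fun b l c n => (Matrix.of fun s => mdpRow (μ n) c s0 s (q s (e.symm l s) (b s))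
      (g s (e.symm l s) (b s))).det)
  have ha : ∀ r l, a r l ∈ polyFam μ := by
    rintro (r | b) l
    · simp only [a, Sum.elim_inl]
      split_ifs
      · exact one_mem _
      · exact zero_mem _
    · exact mdpDet_mem μ s0 _ _
  refine Tame.congr (fun c n => ?_) (fm_tame hμ k (fun _ _ _ => True) (fun _ => Tame.true) a ha)
  rw [disc_gt_iff q g (h0 n) (h1 n) (hv n) s0 c]
  simp only [Sum.forall, a, Sum.elim_inl, Sum.elim_inr, true_imp_iff]
  have hone : ∀ (x : Fin k → ℝ) r, ∑ l, (if l = r then (1 : ℝ → ℕ → ℝ) else 0) c n * x l = x r := by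
    intro x r
    rw [Finset.sum_eq_single r]
    · simp
    · intro l _ hl; simp [hl]
    · simp
  constructor
  · rintro ⟨x, hx1, hx2⟩
    refine ⟨fun α => x (e α), fun α => ?_, fun b => ?_⟩
    · have := hx1 (e α)
      rwa [hone] at this
    · have := hx2 b
      rw [← e.sum_comp] at this
      simpa [mul_comm] using this
  · rintro ⟨z, hz1, hz2⟩
    refine ⟨fun l => z (e.symm l), fun r => ?_, fun b => ?_⟩
    · rw [hone]; exact hz1 _
    · rw [← e.sum_comp]
      simpa [mul_comm] using hz2 b


theorem seq_lemma {μ V : ℕ → ℝ} {η δ K : ℝ} (hη : 0 < η) (hδ : 0 < δ) (hμ : Antitone μ)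
    (h0 : ∀ n, 0 < μ n) (hV0 : ∀ n, 0 ≤ V n) (hV : ∀ n, V n ≤ η * μ n)
    (hK : ∀ N, ∑ n ∈ Finset.range N, V n ≤ K)
    (hdiv : ∀ B : ℝ, ∃ N, B ≤ ∑ n ∈ Finset.range N, V n / μ n) :
    ∃ ν : ℕ → ℕ, Monotone ν ∧
      (∀ k, ∑ m ∈ Finset.Ico (ν k) (ν (k + 1)), V m ≤ 3 * η * μ (ν k)) ∧
      ∀ L, ∑ k ∈ Finset.range L, μ (ν k) ≤ δ := by
  classical
  let A : ℕ → ℝ := fun n => ∑ m ∈ Finset.range n, V m / (η * μ m)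
  have hA : ∀ k : ℕ, ∃ n, 2 * (k : ℝ) ≤ A n := by
    intro k
    obtain ⟨N, hN⟩ := hdiv (2 * k * η)
    refine ⟨N, ?_⟩
    have : A N = (∑ n ∈ Finset.range N, V n / μ n) / η := by
      simp only [A, Finset.sum_div]
      exact Finset.sum_congr rfl fun m _ => by rw [div_div, mul_comm]
    rw [this, le_div_iff₀ hη]
    exact hN
  let ν : ℕ → ℕ := fun k => Nat.find (hA k)
  have hν1 : ∀ k : ℕ, 2 * (k : ℝ) ≤ A (ν k) := fun k => Nat.find_spec (hA k)
  have hν2 : ∀ k : ℕ, A (ν k) ≤ 2 * (k : ℝ) + 1 := by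
    intro k
    rcases Nat.eq_zero_or_pos (ν k) with h | h
    · rw [h]; simp only [A, Finset.range_zero, Finset.sum_empty]; positivity
    · obtain ⟨m, hm⟩ : ∃ m, ν k = m + 1 := ⟨ν k - 1, by omega⟩
      have h1 : A m < 2 * (k : ℝ) := by
        have := Nat.find_min (hA k) (m := m) (by change m < ν k; omega)
        exact not_le.1 this
      have h2 : A (m + 1) = A m + V m / (η * μ m) := Finset.sum_range_succ _ _
      have h3 : V m / (η * μ m) ≤ 1 := by
        rw [div_le_one (mul_pos hη (h0 m))]; exact hV m
      rw [hm, h2]; linarith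
  have hmono : Monotone ν := by
    refine monotone_nat_of_le_succ fun k => Nat.find_min' _ ?_
    have := hν1 (k + 1)
    push_cast at this
    linarith
  have hdiff : ∀ k, A (ν (k + 1)) - A (ν k) =
      ∑ m ∈ Finset.Ico (ν k) (ν (k + 1)), V m / (η * μ m) := fun k => by
    rw [Finset.sum_Ico_eq_sub _ (hmono (Nat.le_succ k))]
  have hup : ∀ k, ∑ m ∈ Finset.Ico (ν k) (ν (k + 1)), V m ≤ 3 * η * μ (ν k) := by
    intro k
    have e1 : ∑ m ∈ Finset.Ico (ν k) (ν (k + 1)), V m ≤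
        ∑ m ∈ Finset.Ico (ν k) (ν (k + 1)), (η * μ (ν k)) * (V m / (η * μ m)) := by
      refine Finset.sum_le_sum fun m hm => ?_
      rw [Finset.mem_Ico] at hm
      have hp := mul_pos hη (h0 m)
      rw [mul_div_assoc', le_div_iff₀ hp, mul_comm]
      refine mul_le_mul_of_nonneg_right ?_ (hV0 m)
      exact mul_le_mul_of_nonneg_left (hμ hm.1) hη.le
    rw [← Finset.mul_sum, ← hdiff] at e1
    have := hν1 k
    have := hν2 (k + 1)
    push_cast at this
    have h3 : A (ν (k + 1)) - A (ν k) ≤ 3 := by linarith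
    have := mul_le_mul_of_nonneg_left h3 (mul_pos hη (h0 (ν k))).le
    linarith
  have hlow : ∀ k, η * μ (ν (k + 1)) ≤ ∑ m ∈ Finset.Ico (ν k) (ν (k + 1)), V m := by
    intro k
    have e1 : ∑ m ∈ Finset.Ico (ν k) (ν (k + 1)), (η * μ (ν (k + 1))) * (V m / (η * μ m)) ≤
        ∑ m ∈ Finset.Ico (ν k) (ν (k + 1)), V m := by
      refine Finset.sum_le_sum fun m hm => ?_
      rw [Finset.mem_Ico] at hm
      have hp := mul_pos hη (h0 m)
      rw [mul_div_assoc', div_le_iff₀ hp, mul_comm (V m)]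
      refine mul_le_mul_of_nonneg_right ?_ (hV0 m)
      exact mul_le_mul_of_nonneg_left (hμ hm.2.le) hη.le
    rw [← Finset.mul_sum, ← hdiff] at e1
    have := hν1 (k + 1)
    have := hν2 k
    push_cast at *
    have h3 : 1 ≤ A (ν (k + 1)) - A (ν k) := by linarith
    have := mul_le_mul_of_nonneg_left h3 (mul_pos hη (h0 (ν (k + 1)))).le
    linarith
  have hsum : Summable fun k => μ (ν k) := by
    rw [← summable_nat_add_iff 1]
    refine summable_of_sum_range_le (c := K / η) (fun k => (h0 _).le) fun L => ?_
    rw [le_div_iff₀ hη, mul_comm, Finset.mul_sum]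
    refine le_trans (Finset.sum_le_sum fun k _ => hlow k) ?_
    have : ∑ k ∈ Finset.range L, ∑ m ∈ Finset.Ico (ν k) (ν (k + 1)), V m =
        ∑ m ∈ Finset.Ico (ν 0) (ν L), V m := by
      induction L with
      | zero => simp
      | succ L ih =>
        rw [Finset.sum_range_succ, ih, Finset.sum_Ico_consecutive _ (hmono (Nat.zero_le _))
          (hmono (Nat.le_succ _))]
    rw [this]
    refine le_trans (Finset.sum_le_sum_of_subset_of_nonneg ?_ fun _ _ _ => hV0 _) (hK (ν L))
    intro m; simp
  have ht := tendsto_sum_nat_add fun k => μ (ν k)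
  obtain ⟨k0, hk0⟩ := (ht.eventually (gt_mem_nhds hδ)).exists
  refine ⟨fun k => ν (k + k0), fun a b h => hmono (by omega), fun k => ?_, fun L => ?_⟩
  · have := hup (k + k0)
    rwa [show k + k0 + 1 = k + 1 + k0 by omega] at this
  · refine le_trans (Summable.sum_le_tsum _ (fun k _ => (h0 _).le) ?_) hk0.le
    exact (summable_nat_add_iff k0).2 hsum

/-- A slowly varying summable sequence of discount factors. -/
theorem disc_sequence {S I J : Type*} [Fintype S] [Fintype I] [Nonempty I] [Fintype J]
    [Nonempty J] (q : S → I → J → S) (g : S → I → J → ℝ)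
    (hg : ∀ s i j, g s i j ∈ Set.Icc (0 : ℝ) 1) {η δ : ℝ} (hη : 0 < η) (hη6 : η ≤ 1 / 6)
    (hδ : 0 < δ) :
    ∃ (l : ℕ → ℝ) (w : ℕ → S → ℝ), (∀ k, IsDisc q g (l k) (w k)) ∧ (∀ k, 0 < l k) ∧
      (∀ k, l (k + 1) ≤ l k) ∧ (∀ k, l k - l (k + 1) ≤ 6 * η * l (k + 1)) ∧
      (∀ k s, |w k s - w (k + 1) s| ≤ 6 * η * l (k + 1)) ∧
      ∀ L, ∑ k ∈ Finset.range L, l k ≤ δ := by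
  classical
  set C : ℝ := Fintype.card S + 1 with hC
  have hC0 : 0 < C := by positivity
  set ρ : ℝ := η / C with hρ
  have hρ0 : 0 < ρ := by positivity
  let μ : ℕ → ℝ := fun n => 1 / (1 + ρ * (n + 1))
  have hden : ∀ n : ℕ, 0 < 1 + ρ * ((n : ℝ) + 1) := fun n => by positivity
  have h0 : ∀ n, 0 < μ n := fun n => by simp only [μ]; exact div_pos one_pos (hden n)
  have h1 : ∀ n, μ n < 1 := fun n => by
    simp only [μ]; rw [div_lt_one (hden n)]; have : 0 < ρ * ((n : ℝ) + 1) := by positivity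
    linarith
  have hstep : ∀ n, μ n - μ (n + 1) = ρ * μ n * μ (n + 1) := by
    intro n
    have a := (hden n).ne'
    have b := (hden (n + 1)).ne'
    simp only [μ]
    push_cast at b ⊢
    field_simp
    ring
  have hanti : StrictAnti μ := by
    refine strictAnti_nat_of_succ_lt fun n => ?_
    have := hstep n
    have : 0 < ρ * μ n * μ (n + 1) := mul_pos (mul_pos hρ0 (h0 n)) (h0 _)
    linarith
  choose v hv using fun n => csg_disc_exists q g hg (μ n) (h0 n) (h1 n)
  choose K hK using fun s => disc_variation q g hanti h0 h1 hv s
  let V : ℕ → ℝ := fun n => (∑ s, |v n s - v (n + 1) s|) + (μ n - μ (n + 1))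
  have hVs : ∀ n s, |v n s - v (n + 1) s| ≤ ρ * μ n := by
    intro n s
    refine (csg_disc_lip q g hg (h0 n) (h1 n) (hv n) (hv (n + 1)) s).trans ?_
    rw [div_le_iff₀ (h0 n), hstep n, abs_of_nonneg (mul_pos (mul_pos hρ0 (h0 n)) (h0 _)).le]
    refine mul_le_mul_of_nonneg_left (hanti.antitone (Nat.le_succ n)) (mul_pos hρ0 (h0 n)).le
  have hstep0 : ∀ n, 0 ≤ μ n - μ (n + 1) := fun n => by
    rw [hstep]; exact (mul_pos (mul_pos hρ0 (h0 n)) (h0 _)).le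
  have hV0 : ∀ n, 0 ≤ V n := fun n => add_nonneg (Finset.sum_nonneg fun _ _ => abs_nonneg _) (hstep0 n)
  have hV : ∀ n, V n ≤ η * μ n := by
    intro n
    have e1 : ∑ s, |v n s - v (n + 1) s| ≤ Fintype.card S * (ρ * μ n) := by
      refine (Finset.sum_le_sum fun s _ => hVs n s).trans ?_
      simp
    have e2 : μ n - μ (n + 1) ≤ ρ * μ n := by
      rw [hstep]
      exact mul_le_of_le_one_right (mul_pos hρ0 (h0 n)).le (h1 _).le
    have e3 : η * μ n = Fintype.card S * (ρ * μ n) + ρ * μ n := by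
      have : η = C * ρ := by rw [hρ]; field_simp
      rw [this, hC]; ring
    simp only [V]; linarith
  have hKV : ∀ N, ∑ n ∈ Finset.range N, V n ≤ (∑ s, K s) + 1 := by
    intro N
    simp only [V, Finset.sum_add_distrib]
    rw [Finset.sum_comm, Finset.sum_range_sub']
    have := Finset.sum_le_sum fun s (_ : s ∈ (Finset.univ : Finset S)) => hK s N
    have := h0 N
    have := h1 0
    linarith
  have hdiv : ∀ B : ℝ, ∃ N, B ≤ ∑ n ∈ Finset.range N, V n / μ n := by
    intro B
    -- comparison with the harmonic series
    have hterm : ∀ n : ℕ, (ρ / (1 + 2 * ρ)) * (1 / ((n : ℝ) + 1)) ≤ V n / μ n := by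
      intro n
      have e1 : ρ * μ (n + 1) ≤ V n / μ n := by
        rw [le_div_iff₀ (h0 n)]
        have := hstep n
        have h3 : 0 ≤ ∑ s, |v n s - v (n + 1) s| := Finset.sum_nonneg fun _ _ => abs_nonneg _
        simp only [V]
        nlinarith
      refine le_trans ?_ e1
      rw [div_mul_div_comm, mul_one]
      simp only [μ]
      rw [mul_one_div]
      refine div_le_div_of_nonneg_left hρ0.le (hden _) ?_
      push_cast
      have : (0 : ℝ) ≤ n := Nat.cast_nonneg n
      nlinarith [mul_nonneg hρ0.le this]
    have hh := Real.tendsto_sum_range_one_div_nat_succ_atTop.const_mul_atTop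
      (show 0 < ρ / (1 + 2 * ρ) by positivity)
    obtain ⟨N, hN⟩ := (hh.eventually_ge_atTop B).exists
    refine ⟨N, hN.trans ?_⟩
    rw [Finset.mul_sum]
    exact Finset.sum_le_sum fun n _ => hterm n
  obtain ⟨ν, hνm, hν, hνs⟩ := seq_lemma hη hδ hanti.antitone h0 hV0 hV hKV hdiv
  have tele : ∀ k, μ (ν k) - μ (ν (k + 1)) ≤ ∑ m ∈ Finset.Ico (ν k) (ν (k + 1)), V m := by
    intro k
    have : ∑ m ∈ Finset.Ico (ν k) (ν (k + 1)), (μ m - μ (m + 1)) = μ (ν k) - μ (ν (k + 1)) := by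
      have := Finset.sum_Ico_sub (fun m => - μ m) (hνm (Nat.le_succ k))
      simp only [neg_sub_neg] at this
      exact this
    rw [← this]
    refine Finset.sum_le_sum fun m _ => ?_
    have h3 : 0 ≤ ∑ s, |v m s - v (m + 1) s| := Finset.sum_nonneg fun _ _ => abs_nonneg _
    simp only [V]; linarith
  have tele2 : ∀ k s, |v (ν k) s - v (ν (k + 1)) s| ≤ ∑ m ∈ Finset.Ico (ν k) (ν (k + 1)), V m := by
    intro k s
    have : ∑ m ∈ Finset.Ico (ν k) (ν (k + 1)), (v m s - v (m + 1) s) =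
        v (ν k) s - v (ν (k + 1)) s := by
      have := Finset.sum_Ico_sub (fun m => - v m s) (hνm (Nat.le_succ k))
      simp only [neg_sub_neg] at this
      exact this
    rw [← this]
    refine (Finset.abs_sum_le_sum_abs _ _).trans (Finset.sum_le_sum fun m _ => ?_)
    have h3 : |v m s - v (m + 1) s| ≤ ∑ s, |v m s - v (m + 1) s| :=
      Finset.single_le_sum (f := fun s => |v m s - v (m + 1) s|) (fun _ _ => abs_nonneg _)
        (Finset.mem_univ s)
    have := hstep0 m
    simp only [V]; linarith
  have hratio : ∀ k, 3 * η * μ (ν k) ≤ 6 * η * μ (ν (k + 1)) := by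
    intro k
    have a := (tele k).trans (hν k)
    have : 3 * η * μ (ν k) ≤ 1 / 2 * μ (ν k) := by
      refine mul_le_mul_of_nonneg_right ?_ (h0 _).le
      linarith
    have h2 : μ (ν k) ≤ 2 * μ (ν (k + 1)) := by linarith
    nlinarith
  refine ⟨fun k => μ (ν k), fun k => v (ν k), fun k => hv _, fun k => h0 _, fun k => ?_,
    fun k => ?_, fun k s => ?_, hνs⟩
  · exact hanti.antitone (hνm (Nat.le_succ k))
  · exact ((tele k).trans (hν k)).trans (hratio k)
  · exact ((tele2 k s).trans (hν k)).trans (hratio k)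


/-- potential -/
def mnP (l : ℕ → ℝ) (s : ℝ) : ℝ :=
  2 * ∑ k ∈ Finset.range ⌊s / 2⌋₊, l k + (s - 2 * ⌊s / 2⌋₊) * l ⌊s / 2⌋₊

theorem mnP_nonneg {l : ℕ → ℝ} (hl : ∀ k, 0 < l k) {s : ℝ} (hs : 0 ≤ s) : 0 ≤ mnP l s := by
  have h1 : (⌊s / 2⌋₊ : ℝ) ≤ s / 2 := Nat.floor_le (by linarith)
  have h2 : 0 ≤ ∑ k ∈ Finset.range ⌊s / 2⌋₊, l k := Finset.sum_nonneg fun k _ => (hl k).le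
  have h3 : 0 ≤ (s - 2 * ⌊s / 2⌋₊) * l ⌊s / 2⌋₊ := mul_nonneg (by linarith) (hl _).le
  unfold mnP; linarith

theorem mnP_le {l : ℕ → ℝ} (hl : ∀ k, 0 < l k) {δ : ℝ}
    (hδ : ∀ L, ∑ k ∈ Finset.range L, l k ≤ δ) (s : ℝ) : mnP l s ≤ 2 * δ := by
  have h1 : s / 2 < ⌊s / 2⌋₊ + 1 := Nat.lt_floor_add_one _
  have h2 := hδ (⌊s / 2⌋₊ + 1)
  rw [Finset.sum_range_succ] at h2
  have h3 : (s - 2 * ⌊s / 2⌋₊) * l ⌊s / 2⌋₊ ≤ 2 * l ⌊s / 2⌋₊ :=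
    mul_le_mul_of_nonneg_right (by linarith) (hl _).le
  unfold mnP; linarith

theorem floor_adj {s s' : ℝ} (hs : 0 ≤ s) (hs' : 0 ≤ s') (h : |s' - s| ≤ 2) :
    ⌊s' / 2⌋₊ = ⌊s / 2⌋₊ ∨ ⌊s' / 2⌋₊ = ⌊s / 2⌋₊ + 1 ∨ ⌊s' / 2⌋₊ + 1 = ⌊s / 2⌋₊ := by
  rw [abs_le] at h
  have h1 : ⌊s' / 2⌋₊ ≤ ⌊s / 2⌋₊ + 1 := by
    rw [← Nat.floor_add_one (by linarith)]
    exact Nat.floor_mono (by linarith)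
  have h2 : ⌊s / 2⌋₊ ≤ ⌊s' / 2⌋₊ + 1 := by
    rw [← Nat.floor_add_one (by linarith)]
    exact Nat.floor_mono (by linarith)
  omega

theorem mnP_step {l : ℕ → ℝ} (hl : ∀ k, 0 < l k) (hm : ∀ k, l (k+1) ≤ l k) {e : ℝ}
    (he : 0 ≤ e)
    (hd : ∀ k, l k - l (k+1) ≤ e * l (k+1)) {s s' : ℝ} (hs : 0 ≤ s) (hs' : 0 ≤ s')
    (h : |s' - s| ≤ 2) :
    l ⌊s / 2⌋₊ * (s' - s) - 2 * e * l ⌊s / 2⌋₊ ≤ mnP l s' - mnP l s := by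
  have a1 : (⌊s / 2⌋₊ : ℝ) ≤ s / 2 := Nat.floor_le (by linarith)
  have a2 : s / 2 < ⌊s / 2⌋₊ + 1 := Nat.lt_floor_add_one _
  have b1 : (⌊s' / 2⌋₊ : ℝ) ≤ s' / 2 := Nat.floor_le (by linarith)
  have b2 : s' / 2 < ⌊s' / 2⌋₊ + 1 := Nat.lt_floor_add_one _
  rcases floor_adj hs hs' h with h0 | h0 | h0
  · unfold mnP
    rw [h0]
    have := mul_nonneg he (hl ⌊s / 2⌋₊).le
    nlinarith
  · unfold mnP
    rw [h0] at b1 b2 ⊢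
    rw [Finset.sum_range_succ]
    generalize ⌊s / 2⌋₊ = k at *
    push_cast at *
    have c1 : (s' - 2 * (k + 1)) * (l k - l (k+1)) ≤ 2 * (l k - l (k+1)) :=
      mul_le_mul_of_nonneg_right (by linarith) (by linarith [hm k])
    have c2 : e * l (k+1) ≤ e * l k := mul_le_mul_of_nonneg_left (hm k) he
    have c3 := hd k
    nlinarith
  · unfold mnP
    rw [← h0] at a1 a2 ⊢
    rw [Finset.sum_range_succ]
    generalize ⌊s' / 2⌋₊ = k at *
    push_cast at *
    have c1 : (2 * (k + 1) - s') * (l k - l (k+1)) ≤ 2 * (l k - l (k+1)) :=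
      mul_le_mul_of_nonneg_right (by linarith) (by linarith [hm k])
    have c3 := hd k
    nlinarith

/-- pmf from simplex point -/
def simplexPMF {I : Type*} [Fintype I] (x : I → ℝ) (hx : x ∈ stdSimplex ℝ I) : PMF I :=
  PMF.ofFintype (fun i => ENNReal.ofReal (x i)) (by
    rw [← ENNReal.ofReal_sum_of_nonneg (fun i _ => hx.1 i), hx.2, ENNReal.ofReal_one])

theorem simplexPMF_apply {I : Type*} [Fintype I] (x : I → ℝ) (hx : x ∈ stdSimplex ℝ I) (i : I) :
    ((simplexPMF x hx) i).toReal = x i := by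
  simp [simplexPMF, ENNReal.toReal_ofReal (hx.1 i)]

theorem pmf_sum_one {I : Type*} [Fintype I] (p : PMF I) : ∑ i, (p i).toReal = 1 := by
  rw [← ENNReal.toReal_sum (fun i _ => p.apply_ne_top i), ← tsum_fintype (L := .unconditional I), p.tsum_coe]
  simp

/-- update of the state and the statistic -/
def mnStep {S I J : Type*} (q : S → I → J → S) (g : S → I → J → ℝ) (w : ℕ → S → ℝ) (ε : ℝ)
    (z : S × ℝ) (a : I × J) : S × ℝ :=
  (q z.1 a.1 a.2, max 0 (z.2 + g z.1 a.1 a.2 - w ⌊z.2 / 2⌋₊ (q z.1 a.1 a.2) + ε))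

theorem mn_main {S I J : Type*} [Fintype I] [Fintype J]
    (q : S → I → J → S) (g : S → I → J → ℝ) (hg : ∀ s i j, g s i j ∈ Set.Icc (0:ℝ) 1)
    (l : ℕ → ℝ) (w : ℕ → S → ℝ) {ε e δ : ℝ} (hε : 0 < ε) (hε1 : ε ≤ 1) (he : 0 ≤ e)
    (hee : 6 * e ≤ ε)
    (hw : ∀ k s, w k s ∈ Set.Icc (0:ℝ) 1)
    (hopt : ∀ k s, ∃ x ∈ stdSimplex ℝ I, ∀ j,
      w k s ≤ ∑ i, x i * (l k * g s i j + (1 - l k) * w k (q s i j)))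
    (hl : ∀ k, 0 < l k) (hm : ∀ k, l (k+1) ≤ l k)
    (hd : ∀ k, l k - l (k+1) ≤ e * l (k+1))
    (hwd : ∀ k s, |w k s - w (k+1) s| ≤ e * l (k+1))
    (hδ : ∀ L, ∑ k ∈ Finset.range L, l k ≤ δ) (hδ1 : δ ≤ 1) (s₁ : S) :
    ∃ (σ : List (I × J) → PMF I) (N : ℕ), ∀ (τ : List (I × J) → PMF J), ∀ n ≥ N,
      w 0 s₁ - (3 * ε + 2 * δ) ≤ gamePayoff q g σ τ s₁ n := by
  choose x hx hxo using hopt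
  have hl1 : ∀ k, l k ≤ 1 := by
    intro k
    have h1 := hδ (k+1)
    rw [Finset.sum_range_succ] at h1
    have : 0 ≤ ∑ k ∈ Finset.range k, l k := Finset.sum_nonneg fun k _ => (hl k).le
    linarith
  have hδ0 : 0 ≤ δ := by simpa using hδ 0
  let st := mnStep q g w ε
  let tr : List (I × J) → S × ℝ := fun h => h.foldl st (s₁, 0)
  have htr : ∀ h i j, tr (h ++ [(i,j)]) = st (tr h) (i,j) := by
    intro h i j; simp [tr, List.foldl_append]
  have htr0 : ∀ h, 0 ≤ (tr h).2 := by
    intro h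
    induction h using List.reverseRecOn with
    | nil => simp [tr]
    | append_singleton h a ih => rw [show a = (a.1, a.2) from rfl, htr]; exact le_max_left _ _
  let σ : List (I × J) → PMF I := fun h =>
    simplexPMF (x ⌊(tr h).2 / 2⌋₊ (tr h).1) (hx _ _)
  let Y : S × ℝ → ℝ := fun z => w ⌊z.2 / 2⌋₊ z.1 + mnP l z.2
  let K : ℝ := 2 / (ε * l 0)
  let B : ℝ := 1 + 2 * δ
  have hK : 0 < K := div_pos two_pos (mul_pos hε (hl 0))
  have hYB : ∀ z, Y z ≤ B := fun z => by
    have := (hw ⌊z.2 / 2⌋₊ z.1).2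
    have := mnP_le hl hδ z.2
    simp only [Y, B]; linarith
  -- pointwise
  have hpt : ∀ z : S × ℝ, 0 ≤ z.2 → ∀ i j,
      (l ⌊z.2/2⌋₊ * g z.1 i j + (1 - l ⌊z.2/2⌋₊) * w ⌊z.2/2⌋₊ (q z.1 i j)) - w ⌊z.2/2⌋₊ z.1
        + l ⌊z.2/2⌋₊ * (ε / 2) ≤ Y (st z (i,j)) - Y z ∧
      Y (st z (i,j)) - (2 * ε + 2 * δ) - (if ⌊z.2/2⌋₊ = 0 then 1 else 0) ≤
        g z.1 i j + z.2 - (st z (i,j)).2 := by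
    intro z hz i j
    have hs' : 0 ≤ (st z (i,j)).2 := le_max_left _ _
    have hg0 := hg z.1 i j
    have hw0 := hw ⌊z.2/2⌋₊ (q z.1 i j)
    have hs1 : (st z (i,j)).1 = q z.1 i j := rfl
    have hs2 : (st z (i,j)).2 = max 0 (z.2 + g z.1 i j - w ⌊z.2/2⌋₊ (q z.1 i j) + ε) := rfl
    have hge : z.2 + g z.1 i j - w ⌊z.2/2⌋₊ (q z.1 i j) + ε ≤ (st z (i,j)).2 := le_max_right _ _
    have hle : (st z (i,j)).2 ≤ z.2 + 2 := by
      rw [hs2]; apply max_le <;> linarith [hg0.1, hg0.2, hw0.1, hw0.2]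
    have habs : |(st z (i,j)).2 - z.2| ≤ 2 := by
      rw [abs_le]; constructor <;> linarith [hg0.1, hg0.2, hw0.1, hw0.2]
    have hP := mnP_step hl hm he hd hz hs' habs
    have hww : |w ⌊(st z (i,j)).2/2⌋₊ (q z.1 i j) - w ⌊z.2/2⌋₊ (q z.1 i j)| ≤ e * l ⌊z.2/2⌋₊ := by
      rcases floor_adj hz hs' habs with h0 | h0 | h0
      · rw [h0]; simpa using mul_nonneg he (hl _).le
      · rw [h0, abs_sub_comm]
        exact (hwd _ _).trans (mul_le_mul_of_nonneg_left (hm _) he)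
      · rw [← h0]; exact hwd _ _
    rw [abs_le] at hww
    have hlk := hl ⌊z.2/2⌋₊
    have hel : e * l ⌊z.2/2⌋₊ ≤ ε := by nlinarith [hl1 ⌊z.2/2⌋₊]
    have hP' := mnP_le hl hδ (st z (i,j)).2
    simp only [Y, hs1]
    constructor
    · have h1 := mul_le_mul_of_nonneg_left hge hlk.le
      nlinarith
    · have key : w ⌊z.2/2⌋₊ (q z.1 i j) - ε - (if ⌊z.2/2⌋₊ = 0 then 1 else 0) ≤
        g z.1 i j + z.2 - (st z (i,j)).2 := by
        rw [hs2]
        rcases le_total 0 (z.2 + g z.1 i j - w ⌊z.2/2⌋₊ (q z.1 i j) + ε) with h | h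
        · rw [max_eq_right h]; split_ifs <;> linarith
        · rw [max_eq_left h]
          have : ⌊z.2/2⌋₊ = 0 := by
            rw [Nat.floor_eq_zero]; linarith [hg0.1, hw0.2]
          rw [if_pos this]; linarith [hg0.1, hw0.2]
      linarith
  have hmain : ∀ (τ : List (I × J) → PMF J) (n : ℕ) (h : List (I × J)),
      n * (Y (tr h) - (2 * ε + 2 * δ)) - (tr h).2 - K * (B - Y (tr h)) ≤
        expPay q g σ τ n (tr h).1 h := by
    intro τ n
    induction n with
    | zero =>
      intro h
      have h1 := htr0 h
      have h2 : 0 ≤ K * (B - Y (tr h)) := mul_nonneg hK.le (by linarith [hYB (tr h)])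
      simp only [expPay]; push_cast; linarith
    | succ n ih =>
      intro h
      have hz := htr0 h
      set z := tr h with hzdef
      set k := ⌊z.2/2⌋₊ with hk
      have hσ : ∀ i, ((σ h) i).toReal = x k z.1 i := fun i => simplexPMF_apply _ _ i
      have hτ1 := pmf_sum_one (τ h)
      have hx0 := (hx k z.1).1
      have hx1 := (hx k z.1).2
      set c := 2 * ε + 2 * δ with hc
      set D : ℝ := if k = 0 then 1 else 0 with hD
      simp only [expPay, hσ]
      set R := ((n+1:ℕ):ℝ) * (Y z - c) - z.2 - K * (B - Y z) with hR
      set M : ℝ := n + 1 + K with hM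
      have hM0 : 0 < M := by positivity
      have step1 : ∀ i j, R + M * ((l k * g z.1 i j + (1 - l k) * w k (q z.1 i j)) - w k z.1
        + l k * (ε / 2)) - D ≤ g z.1 i j + expPay q g σ τ n (q z.1 i j) (h ++ [(i,j)]) := by
        intro i j
        have h1 := ih (h ++ [(i,j)])
        rw [htr h i j] at h1
        obtain ⟨p1, p2⟩ := hpt z hz i j
        have p3 := mul_le_mul_of_nonneg_left p1 hM0.le
        rw [← hzdef] at h1
        have h2 : (st z (i,j)).1 = q z.1 i j := rfl
        rw [h2] at h1
        refine le_trans ?_ (add_le_add_right h1 _)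
        rw [hR]
        push_cast
        simp only [hM] at p3 ⊢
        nlinarith
      have hD1 : D ≤ M * (l k * (ε / 2)) := by
        have hlk := hl k
        rw [hD]; split_ifs with h0
        · rw [h0]
          have : K * (l 0 * (ε / 2)) = 1 := by
            simp only [K]; have := (hl 0).ne'; field_simp
          have : 0 ≤ l 0 * (ε / 2) := by have := hl 0; positivity
          rw [hM]; nlinarith [(Nat.cast_nonneg n : (0:ℝ) ≤ n)]
        · positivity
      have e1 : ∀ j, R ≤ ∑ i, x k z.1 i * (g z.1 i j + expPay q g σ τ n (q z.1 i j) (h ++ [(i,j)])) := by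
        intro j
        have h1 : ∑ i, x k z.1 i * (R + M * ((l k * g z.1 i j + (1 - l k) * w k (q z.1 i j)) - w k z.1
          + l k * (ε / 2)) - D) ≤ _ :=
          Finset.sum_le_sum fun i _ => mul_le_mul_of_nonneg_left (step1 i j) (hx0 i)
        refine le_trans ?_ h1
        have h2 : ∑ i, x k z.1 i * (R + M * ((l k * g z.1 i j + (1 - l k) * w k (q z.1 i j)) - w k z.1
          + l k * (ε / 2)) - D) = (R - M * w k z.1 + M * (l k * (ε / 2)) - D) * ∑ i, x k z.1 i +
            M * ∑ i, x k z.1 i * (l k * g z.1 i j + (1 - l k) * w k (q z.1 i j)) := by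
          rw [Finset.mul_sum, Finset.mul_sum, ← Finset.sum_add_distrib]
          exact Finset.sum_congr rfl fun i _ => by ring
        rw [h2, hx1]
        have h3 := mul_le_mul_of_nonneg_left (hxo k z.1 j) hM0.le
        linarith
      calc R = ∑ j, ((τ h) j).toReal * R := by rw [← Finset.sum_mul, hτ1, one_mul]
        _ ≤ ∑ j, ((τ h) j).toReal * ∑ i, x k z.1 i * (g z.1 i j + expPay q g σ τ n (q z.1 i j) (h ++ [(i,j)])) :=
          Finset.sum_le_sum fun j _ => mul_le_mul_of_nonneg_left (e1 j) ENNReal.toReal_nonneg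
        _ = _ := by
          rw [Finset.sum_comm]
          refine Finset.sum_congr rfl fun j _ => ?_
          rw [Finset.mul_sum]
          exact Finset.sum_congr rfl fun i _ => by ring
  obtain ⟨N, hN⟩ := exists_nat_ge (K * B / ε)
  refine ⟨σ, N + 1, fun τ n hn => ?_⟩
  have h1 := hmain τ n []
  have hY : Y (tr []) = w 0 s₁ := by simp [Y, tr, mnP]
  rw [hY] at h1
  have h2 : (tr []) = (s₁, 0) := rfl
  rw [h2] at h1
  simp only at h1
  have hn0 : (0:ℝ) < n := by exact_mod_cast (by omega : 0 < n)
  unfold gamePayoff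
  rw [one_div, ← div_eq_inv_mul, le_div_iff₀ hn0]
  have h3 : K * B ≤ ε * n := by
    have : (N:ℝ) ≤ n := by exact_mod_cast (by omega : N ≤ n)
    rw [div_le_iff₀ hε] at hN
    nlinarith
  have h4 := mul_nonneg hK.le (hw 0 s₁).1
  nlinarith


theorem expPay_swap {S I J : Type*} [Fintype I] [Fintype J]
    (q : S → I → J → S) (g : S → I → J → ℝ)
    (σ : List (I × J) → PMF I) (τ : List (I × J) → PMF J) (n : ℕ) : ∀ (s : S) (h : List (I × J)),
    expPay (fun s j i => q s i j) (fun s j i => 1 - g s i j)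
      (fun h => τ (h.map Prod.swap)) (fun h => σ (h.map Prod.swap)) n s (h.map Prod.swap) =
    n - expPay q g σ τ n s h := by
  induction n with
  | zero => intro s h; simp [expPay]
  | succ n ih =>
    intro s h
    have hss : ∀ h : List (I × J), (h.map Prod.swap).map Prod.swap = h := fun h => by
      rw [List.map_map]; simp
    simp only [expPay]
    rw [Finset.sum_comm, hss]
    have h1 : ∀ i j, expPay (fun s j i => q s i j) (fun s j i => 1 - g s i j)
      (fun h => τ (h.map Prod.swap)) (fun h => σ (h.map Prod.swap)) n (q s i j)
        (h.map Prod.swap ++ [(j, i)]) = n - expPay q g σ τ n (q s i j) (h ++ [(i,j)]) := by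
      intro i j
      rw [← ih]; simp
    simp only [h1]
    have h2 : ((n+1:ℕ):ℝ) = ∑ i, ∑ j, ((σ h) i).toReal * ((τ h) j).toReal * ((n:ℝ)+1) := by
      simp_rw [mul_assoc, ← Finset.mul_sum, ← Finset.sum_mul, pmf_sum_one]; simp
    rw [h2, ← Finset.sum_sub_distrib]
    refine Finset.sum_congr rfl fun i _ => ?_
    rw [← Finset.sum_sub_distrib]
    exact Finset.sum_congr rfl fun j _ => by ring

theorem finite_game {S I J : Type*} [Fintype S] [Fintype I] [Nonempty I] [Fintype J] [Nonempty J]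
    (q : S → I → J → S) (g : S → I → J → ℝ) (hg : ∀ s i j, g s i j ∈ Set.Icc (0:ℝ) 1) (s₁ : S)
    {ε : ℝ} (hε : 0 < ε) :
    ∃ v : ℝ, (∃ (σ : List (I × J) → PMF I) (N : ℕ), ∀ (τ : List (I × J) → PMF J), ∀ n ≥ N,
      v - ε ≤ gamePayoff q g σ τ s₁ n) ∧
      (∃ (τ : List (I × J) → PMF J) (N : ℕ), ∀ (σ : List (I × J) → PMF I), ∀ n ≥ N,
      gamePayoff q g σ τ s₁ n ≤ v + ε) := by
  set a : ℝ := min ε 1 with ha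
  have ha0 : 0 < a := lt_min hε one_pos
  have ha1 : a ≤ 1 := min_le_right _ _
  have haε : a ≤ ε := min_le_left _ _
  obtain ⟨l, w, hD, hl, hm, hd, hwd, hδ⟩ := disc_sequence q g hg (η := a / 180) (δ := a / 5)
    (by positivity) (by linarith) (by positivity)
  refine ⟨w 0 s₁, ?_, ?_⟩
  · obtain ⟨σ, N, h⟩ := mn_main q g hg l w (ε := a / 5) (e := 6 * (a / 180)) (δ := a / 5)
      (by positivity) (by linarith) (by positivity) (by linarith)
      (fun k s => (hD k).1 s) (fun k s => (hD k).2.1 s) hl hm hd hwd hδ (by linarith) s₁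
    exact ⟨σ, N, fun τ n hn => by linarith [h τ n hn]⟩
  · obtain ⟨σ, N, h⟩ := mn_main (fun s j i => q s i j) (fun s j i => 1 - g s i j)
      (fun s j i => ⟨by linarith [(hg s i j).2], by linarith [(hg s i j).1]⟩)
      l (fun k s => 1 - w k s) (ε := a / 5) (e := 6 * (a / 180)) (δ := a / 5)
      (by positivity) (by linarith) (by positivity) (by linarith)
      (fun k s => ⟨by linarith [((hD k).1 s).2], by linarith [((hD k).1 s).1]⟩)
      (fun k s => by
        obtain ⟨y, hy, hyo⟩ := (hD k).2.2 s
        refine ⟨y, hy, fun i => ?_⟩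
        have : ∑ j, y j * (l k * (1 - g s i j) + (1 - l k) * (1 - w k (q s i j))) =
          ∑ j, y j - ∑ j, y j * (l k * g s i j + (1 - l k) * w k (q s i j)) := by
          rw [← Finset.sum_sub_distrib]
          exact Finset.sum_congr rfl fun j _ => by ring
        rw [this, hy.2]; linarith [hyo i]) hl hm hd
      (fun k s => by
        have := hwd k s
        rwa [show (1 - w k s) - (1 - w (k+1) s) = -(w k s - w (k+1) s) by ring, abs_neg])
      hδ (by linarith) s₁
    refine ⟨fun h => σ (h.map Prod.swap), N + 1, fun σ' n hn => ?_⟩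
    have h1 := h (fun h => σ' (h.map Prod.swap)) n (by omega)
    have h2 := expPay_swap q g σ' (fun h => σ (h.map Prod.swap)) n s₁ []
    have h3 : (fun h : List (J × I) => σ ((h.map Prod.swap).map Prod.swap)) = σ := by
      funext h; rw [List.map_map]; simp
    simp only [h3, List.map_nil] at h2
    unfold gamePayoff at h1 ⊢
    rw [h2] at h1
    have hn0 : (0:ℝ) < n := by exact_mod_cast (by omega : 0 < n)
    have h4 : 1 / (n:ℝ) * (n - expPay q g σ' (fun h => σ (h.map Prod.swap)) n s₁ []) =
      1 - 1 / (n:ℝ) * expPay q g σ' (fun h => σ (h.map Prod.swap)) n s₁ [] := by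
      field_simp
    rw [h4] at h1
    linarith

theorem expPay_close {X S I J : Type*} [Fintype I] [Fintype J]
    (q : X → I → J → X) (g : X → I → J → ℝ) (q' : S → I → J → S) (g' : S → I → J → ℝ)
    (R : X → S → Prop) (hR : ∀ x s i j, R x s → R (q x i j) (q' s i j)) {e : ℝ}
    (hg : ∀ x s i j, R x s → |g x i j - g' s i j| ≤ e)
    (σ : List (I × J) → PMF I) (τ : List (I × J) → PMF J) (n : ℕ) : ∀ x s h, R x s →
    |expPay q g σ τ n x h - expPay q' g' σ τ n s h| ≤ n * e := by
  induction n with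
  | zero => intro x s h _; simp [expPay]
  | succ n ih =>
    intro x s h hxs
    simp only [expPay]
    have h2 : ((n+1:ℕ):ℝ) * e = ∑ i, ∑ j, ((σ h) i).toReal * ((τ h) j).toReal * (((n:ℝ)+1) * e) := by
      simp_rw [mul_assoc, ← Finset.mul_sum, ← Finset.sum_mul, pmf_sum_one]; simp
    rw [h2, ← Finset.sum_sub_distrib]
    refine (Finset.abs_sum_le_sum_abs _ _).trans (Finset.sum_le_sum fun i _ => ?_)
    rw [← Finset.sum_sub_distrib]
    refine (Finset.abs_sum_le_sum_abs _ _).trans (Finset.sum_le_sum fun j _ => ?_)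
    have h0 : 0 ≤ ((σ h) i).toReal * ((τ h) j).toReal :=
      mul_nonneg ENNReal.toReal_nonneg ENNReal.toReal_nonneg
    rw [← mul_sub, abs_mul, abs_of_nonneg h0]
    refine mul_le_mul_of_nonneg_left ?_ h0
    have h1 := hg x s i j hxs
    have h3 := ih _ _ (h ++ [(i,j)]) (hR x s i j hxs)
    rw [abs_le] at *
    constructor <;> linarith [h1.1, h1.2, h3.1, h3.2]

theorem gamePayoff_close {X S I J : Type*} [Fintype I] [Fintype J]
    (q : X → I → J → X) (g : X → I → J → ℝ) (q' : S → I → J → S) (g' : S → I → J → ℝ)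
    (R : X → S → Prop) (hR : ∀ x s i j, R x s → R (q x i j) (q' s i j)) {e : ℝ} (he : 0 ≤ e)
    (hg : ∀ x s i j, R x s → |g x i j - g' s i j| ≤ e)
    (σ : List (I × J) → PMF I) (τ : List (I × J) → PMF J) (n : ℕ) (x : X) (s : S) (hxs : R x s) :
    |gamePayoff q g σ τ x n - gamePayoff q' g' σ τ s n| ≤ e := by
  have h := expPay_close q g q' g' R hR hg σ τ n x s [] hxs
  unfold gamePayoff
  rw [← mul_sub, abs_mul, abs_of_nonneg (by positivity)]
  rcases Nat.eq_zero_or_pos n with rfl | hn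
  · simpa using he
  · have : (0:ℝ) < n := by exact_mod_cast hn
    rw [one_div, ← div_eq_inv_mul, div_le_iff₀ this]; linarith

theorem uniform_of_approx {X I J : Type*} [Fintype I] [Nonempty I] [Fintype J] [Nonempty J]
    (q : X → I → J → X) (g : X → I → J → ℝ) (x₁ : X)
    (H : ∀ ε > (0:ℝ), ∃ v : ℝ, (∃ (σ : List (I × J) → PMF I) (N : ℕ), ∀ (τ : List (I × J) → PMF J), ∀ n ≥ N,
      v - ε ≤ gamePayoff q g σ τ x₁ n) ∧
      (∃ (τ : List (I × J) → PMF J) (N : ℕ), ∀ (σ : List (I × J) → PMF I), ∀ n ≥ N,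
      gamePayoff q g σ τ x₁ n ≤ v + ε)) :
    ∃ v : ℝ, Guarantees1 q g x₁ v ∧ Guarantees2 q g x₁ v := by
  let A : Set ℝ := {u | ∃ (σ : List (I × J) → PMF I) (N : ℕ), ∀ (τ : List (I × J) → PMF J), ∀ n ≥ N,
      u ≤ gamePayoff q g σ τ x₁ n}
  have hup : ∀ u b, u ∈ A → (∃ (τ : List (I × J) → PMF J) (N : ℕ), ∀ (σ : List (I × J) → PMF I), ∀ n ≥ N,
      gamePayoff q g σ τ x₁ n ≤ b) → u ≤ b := by
    rintro u b ⟨σ, N, h⟩ ⟨τ, M, h'⟩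
    exact (h τ (max N M) (le_max_left _ _)).trans (h' σ _ (le_max_right _ _))
  have hne : A.Nonempty := by obtain ⟨v, h, _⟩ := H 1 one_pos; exact ⟨_, h⟩
  have hbd : BddAbove A := by
    obtain ⟨v, _, h⟩ := H 1 one_pos
    exact ⟨v + 1, fun u hu => hup _ _ hu h⟩
  refine ⟨sSup A, fun ε hε => ?_, fun ε hε => ?_⟩
  · obtain ⟨u, hu, hlt⟩ := exists_lt_of_lt_csSup hne (show sSup A - ε < sSup A by linarith)
    obtain ⟨σ, N, h⟩ := hu
    exact ⟨σ, N, fun τ n hn => by linarith [h τ n hn]⟩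
  · obtain ⟨v, h1, τ, N, h2⟩ := H (ε/2) (by linarith)
    have : v - ε / 2 ≤ sSup A := le_csSup hbd h1
    exact ⟨τ, N, fun σ n hn => by linarith [h2 σ n hn]⟩


theorem iso_step {m : ℕ} (N : Seminorm ℝ (Fin m → ℝ)) (hNc : Continuous N)
    (F : Finset (Fin m → ℝ)) (hF1 : ∀ f ∈ F, ∀ y, f ⬝ᵥ y ≤ N y)
    (hF2 : ∀ y, ∃ f ∈ F, f ⬝ᵥ y = N y) (X : Set (Fin m → ℝ)) (hX : IsCompact X)
    (b : ℕ → Fin m → ℝ) (hbX : ∀ n, b n ∈ X)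
    (hb : ∀ n r k, N (b (n + k) - b (r + k)) = N (b n - b r)) (p : ℕ) (hp : 0 < p) (D : ℝ)
    (hD : IsLUB (Set.range fun k => N (b (p * k) - b 0)) D) {η : ℝ} (hη : 0 < η) :
    ∃ u p', p ∣ u ∧ p ∣ p' ∧ 0 < p' ∧ ∀ j, D - η ≤ N (b (u + p' * j) - b 0) := by
  classical
  obtain ⟨K, -, hK1, hK2, hK3⟩ := hD.exists_seq_monotone_tendsto ⟨_, Set.mem_range_self 0⟩
  choose k hk using hK3
  simp only at hk
  let U : Ultrafilter ℕ := hyperfilter ℕ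
  have hU : (U : Filter ℕ) ≤ atTop := Nat.hyperfilter_le_atTop
  have hc : ∀ n, ∃ c ∈ X, Tendsto (fun i => b (n + p * k i)) U (𝓝 c) := by
    intro n
    have := hX.ultrafilter_le_nhds (U.map (fun i => b (n + p * k i)))
      (by rw [le_principal_iff, Ultrafilter.coe_map]; exact Filter.mem_map.2 (Filter.univ_mem' fun i => hbX _))
    exact this
  choose c hcX hc using hc
  have f1 : ∀ n r k, N (c (n + k) - b (r + k)) = N (c n - b r) := by
    intro n r t
    have h1 := (hNc.tendsto _).comp ((hc (n + t)).sub_const (b (r + t)))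
    have h2 := (hNc.tendsto _).comp ((hc n).sub_const (b r))
    refine tendsto_nhds_unique h1 (h2.congr fun i => ?_)
    simp only [Function.comp]
    rw [← hb (n + p * k i) r t]; congr 3; ring
  have f0 : ∀ a e, N (b (p * a) - b (p * e)) ≤ D := by
    have : ∀ a e, a ≤ e → N (b (p * e) - b (p * a)) ≤ D := by
      intro a e h
      obtain ⟨t, rfl⟩ := Nat.exists_eq_add_of_le h
      have := hb (p * t) 0 (p * a)
      rw [show p * (a + t) = p * t + p * a by ring]
      rw [zero_add] at this
      rw [this]
      exact hD.1 ⟨t, rfl⟩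
    intro a e
    rcases le_total a e with h | h
    · rw [map_sub_rev]; exact this _ _ h
    · exact this _ _ h
  have f2 : ∀ a e, N (c (p * a) - b (p * e)) ≤ D := by
    intro a e
    have h2 := (hNc.tendsto _).comp ((hc (p * a)).sub_const (b (p * e)))
    refine le_of_tendsto' h2 fun i => ?_
    simp only [Function.comp]
    rw [← mul_add]; exact f0 _ _
  have f3 : N (c 0 - b 0) = D := by
    have h2 := (hNc.tendsto _).comp ((hc 0).sub_const (b 0))
    refine tendsto_nhds_unique h2 ((hK2.mono_left hU).congr fun i => ?_)
    simp only [Function.comp, zero_add]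
    exact (hk i).symm
  let S : ℕ → Finset (Fin m → ℝ) := fun e => F.filter fun f => ∃ a, f ⬝ᵥ (c (p * a) - b (p * e)) = D
  have hpig : ∃ e l, e < l ∧ S e = S l := by
    have : ¬ Function.Injective (fun e => (⟨S e, Finset.mem_powerset.2 (Finset.filter_subset _ _)⟩ : F.powerset)) :=
      not_injective_infinite_finite _
    simp only [Function.Injective] at this
    push Not at this
    obtain ⟨e, l, h, hne⟩ := this
    have h := congrArg Subtype.val h
    rcases lt_or_gt_of_ne hne with h' | h'
    · exact ⟨e, l, h', h⟩
    · exact ⟨l, e, h', h.symm⟩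
  obtain ⟨e, l, hel, hS⟩ := hpig
  have f4 : ∀ j, N (c (p * (l - e) * j) - b 0) = D := by
    intro j
    induction j with
    | zero => simpa using f3
    | succ j ih =>
      have h1 := f1 (p * (l - e) * j) 0 (p * l)
      rw [ih, zero_add] at h1
      obtain ⟨f, hf, hfe⟩ := hF2 (c (p * (l - e) * j + p * l) - b (p * l))
      rw [h1] at hfe
      have hidx : p * (l - e) * j + p * l = p * ((l - e) * j + l) := by ring
      have hfl : f ∈ S l := Finset.mem_filter.2 ⟨hf, _, by rw [← hidx]; exact hfe⟩
      rw [← hS] at hfl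
      obtain ⟨-, a, ha⟩ := Finset.mem_filter.1 hfl
      have h2 := (hF1 f hf (c (p * a) - b (p * l))).trans (f2 a l)
      have h3 := hF1 f hf (c (p * (l - e) * j + p * l) - b (p * e))
      have h4 : D ≤ N (c (p * (l - e) * j + p * l) - b (p * e)) := by
        simp only [dotProduct_sub] at *
        linarith
      have h5 : p * (l - e) * j + p * l = p * (l - e) * (j + 1) + p * e := by
        obtain ⟨t, rfl⟩ := Nat.exists_eq_add_of_lt hel
        have : e + t + 1 - e = t + 1 := by omega
        rw [this]; ring
      have h6 := f1 (p * (l - e) * (j + 1)) 0 (p * e)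
      rw [zero_add, ← h5] at h6
      rw [h6] at h4
      refine le_antisymm ?_ h4
      have := f2 ((l - e) * (j+1)) 0
      rwa [← mul_assoc, mul_zero] at this
  have f5 : ∃ i, N (c 0 - b (p * k i)) < η := by
    have h2 := (hNc.tendsto _).comp ((hc 0).const_sub (c 0))
    simp only [sub_self, map_zero] at h2
    have := (h2.eventually (gt_mem_nhds hη)).exists
    simpa [Function.comp] using this
  obtain ⟨i, hi⟩ := f5
  refine ⟨p * k i, p * (l - e), dvd_mul_right _ _, dvd_mul_right _ _,
    Nat.mul_pos hp (Nat.sub_pos_of_lt hel), fun j => ?_⟩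
  have h1 := f1 0 (p * k i) (p * (l - e) * j)
  rw [zero_add] at h1
  have h2 := map_add_le_add N (c (p * (l - e) * j) - b (p * k i + p * (l - e) * j))
    (b (p * k i + p * (l - e) * j) - b 0)
  rw [sub_add_sub_cancel, f4, h1] at h2
  linarith

theorem iso_periodic {m : ℕ} (N : Seminorm ℝ (Fin m → ℝ)) (hNc : Continuous N)
    (F : Finset (Fin m → ℝ)) (hF1 : ∀ f ∈ F, ∀ y, f ⬝ᵥ y ≤ N y)
    (hF2 : ∀ y, ∃ f ∈ F, f ⬝ᵥ y = N y) (X : Set (Fin m → ℝ)) (hX : IsCompact X)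
    (b : ℕ → Fin m → ℝ) (hbX : ∀ n, b n ∈ X)
    (hb : ∀ n r k, N (b (n + k) - b (r + k)) = N (b n - b r)) {ε : ℝ} (hε : 0 < ε) :
    ∃ p, 0 < p ∧ ∀ k, N (b (p * k) - b 0) ≤ ε := by
  classical
  by_contra hcon
  push Not at hcon
  have hbd : ∃ C, ∀ n, N (b n - b 0) ≤ C := by
    obtain ⟨C, hC⟩ := hX.bddAbove_image (f := fun y => N (y - b 0))
      (by fun_prop)
    exact ⟨C, fun n => hC ⟨b n, hbX n, rfl⟩⟩
  obtain ⟨C, hC⟩ := hbd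
  let D : ℕ → ℝ := fun p => sSup (Set.range fun k => N (b (p * k) - b 0))
  have hD : ∀ p, IsLUB (Set.range fun k => N (b (p * k) - b 0)) (D p) := fun p =>
    isLUB_csSup (Set.range_nonempty _) ⟨C, by rintro _ ⟨k, rfl⟩; exact hC _⟩
  have hDε : ∀ p, 0 < p → ε < D p := fun p hp => by
    obtain ⟨k, hk⟩ := hcon p hp
    exact hk.trans_le ((hD p).1 ⟨k, rfl⟩)
  have hstep : ∀ P : {p : ℕ // 0 < p}, ∃ u : ℕ, ∃ P' : {p : ℕ // 0 < p}, P.1 ∣ u ∧ P.1 ∣ P'.1 ∧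
      ∀ j, D P.1 - ε / 3 ≤ N (b (u + P'.1 * j) - b 0) := by
    rintro ⟨p, hp⟩
    obtain ⟨u, p', h1, h2, h3, h4⟩ := iso_step N hNc F hF1 hF2 X hX b hbX hb p hp (D p) (hD p)
      (show 0 < ε / 3 by linarith)
    exact ⟨u, ⟨p', h3⟩, h1, h2, h4⟩
  choose u nx h1 h2 h3 using hstep
  let P : ℕ → {p : ℕ // 0 < p} := fun i => nx^[i] ⟨1, one_pos⟩
  have hP : ∀ i, P (i + 1) = nx (P i) := fun i => Function.iterate_succ_apply' _ _ _
  have hPd : ∀ i j, i ≤ j → (P i).1 ∣ (P j).1 := by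
    intro i j hij
    induction j, hij using Nat.le_induction with
    | base => exact dvd_rfl
    | succ j _ ih => rw [hP]; exact ih.trans (h2 _)
  let U : ℕ → ℕ := fun i => ∑ r ∈ Finset.range i, u (P r)
  have hU : ∀ i t, ∃ e, U (i + 1 + t) = U i + (u (P i) + (P (i+1)).1 * e) := by
    intro i t
    induction t with
    | zero => exact ⟨0, by simp [U, Finset.sum_range_succ]⟩
    | succ t ih =>
      obtain ⟨e, he⟩ := ih
      obtain ⟨e', he'⟩ := (hPd (i+1) (i+1+t) (by omega)).trans (h1 (P (i + 1 + t)))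
      refine ⟨e + e', ?_⟩
      have : U (i + 1 + (t + 1)) = U (i + 1 + t) + u (P (i + 1 + t)) := by
        rw [← add_assoc]; exact Finset.sum_range_succ _ _
      rw [this, he, he']; ring
  have hlow : ∀ i j, i < j → D (P i).1 - ε / 3 ≤ N (b (U j) - b (U i)) ∧
      N (b (U j) - b (U i)) ≤ D (P i).1 := by
    intro i j hij
    obtain ⟨t, rfl⟩ := Nat.exists_eq_add_of_lt hij
    obtain ⟨e, he⟩ := hU i t
    rw [show i + t + 1 = i + 1 + t by ring, he]
    have h4 := hb (u (P i) + (P (i+1)).1 * e) 0 (U i)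
    rw [zero_add, add_comm _ (U i)] at h4
    rw [h4, hP]
    refine ⟨h3 _ _, ?_⟩
    obtain ⟨a, ha⟩ := dvd_add (h1 (P i)) ((h2 (P i)).mul_right e)
    rw [ha]
    exact (hD _).1 ⟨a, rfl⟩
  choose col hcol1 hcol2 using fun i j => hF2 (b (U j) - b (U i))
  have hno : ∀ i j k, i < j → j < k → col i j ≠ col j k := by
    intro i j k hij hjk heq
    have a1 := hcol2 i j
    have a2 := hcol2 j k
    rw [← heq] at a2
    have a3 := hF1 _ (hcol1 i j) (b (U k) - b (U i))
    have b1 := hlow i j hij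
    have b2 := hlow j k hjk
    have b3 := hlow i k (hij.trans hjk)
    have b4 := hDε (P j).1 (P j).2
    simp only [dotProduct_sub] at a1 a2 a3
    linarith [b1.1, b2.1, b3.2]
  let S : ℕ → Finset (Fin m → ℝ) := fun i => F.filter fun f => ∃ k, i < k ∧ col i k = f
  have : Function.Injective (fun e => (⟨S e, Finset.mem_powerset.2 (Finset.filter_subset _ _)⟩ : F.powerset)) := by
    have key : ∀ i j, i < j → S i ≠ S j := by
      intro i j hij h
      have : col i j ∈ S i := Finset.mem_filter.2 ⟨hcol1 _ _, j, hij, rfl⟩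
      rw [h] at this
      obtain ⟨-, k, hk, hke⟩ := Finset.mem_filter.1 this
      exact hno i j k hij hk hke.symm
    intro i j h
    have h := congrArg Subtype.val h
    by_contra hne
    rcases lt_or_gt_of_ne hne with h' | h'
    · exact key _ _ h' h
    · exact key _ _ h' h.symm
  exact not_injective_infinite_finite _ this

theorem nonexp_periodic {m : ℕ} (N : Seminorm ℝ (Fin m → ℝ)) (hNc : Continuous N)
    (F : Finset (Fin m → ℝ)) (hF1 : ∀ f ∈ F, ∀ y, f ⬝ᵥ y ≤ N y)
    (hF2 : ∀ y, ∃ f ∈ F, f ⬝ᵥ y = N y) (X : Set (Fin m → ℝ)) (hX : IsCompact X)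
    (T : X → X) (hT : ∀ x y : X, N ((T x : Fin m → ℝ) - T y) ≤ N ((x : Fin m → ℝ) - y)) (x : X)
    {ε : ℝ} (hε : 0 < ε) :
    ∃ M p, 0 < p ∧ ∀ k, N ((T^[M + p * k] x : Fin m → ℝ) - T^[M] x) ≤ ε := by
  have hTn : ∀ n (x y : X), N ((T^[n] x : Fin m → ℝ) - T^[n] y) ≤ N ((x : Fin m → ℝ) - y) := by
    intro n
    induction n with
    | zero => intro x y; exact le_rfl
    | succ n ih => intro x y; exact (ih _ _).trans (hT _ _)
  obtain ⟨y', hy', φ, hφ, hlim⟩ := hX.tendsto_subseq (fun n => (T^[n] x).2)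
  let y : X := ⟨y', hy'⟩
  have hclose : ∀ δ > 0, ∃ n₀, ∀ n ≥ n₀, N ((T^[φ n] x : Fin m → ℝ) - y) < δ := by
    intro δ hδ
    have h2 := (hNc.tendsto _).comp (hlim.sub_const y')
    simp only [sub_self, map_zero] at h2
    exact eventually_atTop.1 (h2.eventually (gt_mem_nhds hδ))
  have tri : ∀ a b c : Fin m → ℝ, N (a - c) ≤ N (a - b) + N (b - c) := fun a b c => by
    have := map_add_le_add N (a - b) (b - c)
    rwa [sub_add_sub_cancel] at this
  have hrec : ∀ δ > 0, ∀ K, ∃ n ≥ K, N ((T^[n] y : Fin m → ℝ) - y) ≤ δ := by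
    intro δ hδ K
    obtain ⟨n₀, hn₀⟩ := hclose (δ / 2) (by linarith)
    have hge : φ n₀ + K ≤ φ (φ n₀ + K + n₀) := (by omega : φ n₀ + K ≤ φ n₀ + K + n₀).trans (hφ.id_le _)
    obtain ⟨t, ht⟩ := Nat.exists_eq_add_of_le hge
    have a1 := hn₀ n₀ le_rfl
    have a2 := hn₀ (φ n₀ + K + n₀) (by omega)
    refine ⟨K + t, by omega, ?_⟩
    have a3 := hTn (K + t) y (T^[φ n₀] x)
    rw [← Function.iterate_add_apply, show K + t + φ n₀ = φ (φ n₀ + K + n₀) by rw [ht]; ring] at a3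
    rw [map_sub_rev] at a1
    have := tri (T^[K + t] y) (T^[φ (φ n₀ + K + n₀)] x) y
    linarith
  have hiso : ∀ n r k, N ((T^[n + k] y : Fin m → ℝ) - T^[r + k] y) = N ((T^[n] y : Fin m → ℝ) - T^[r] y) := by
    intro n r k
    apply le_antisymm
    · have := hTn k (T^[n] y) (T^[r] y)
      rwa [← Function.iterate_add_apply, ← Function.iterate_add_apply, add_comm k, add_comm k] at this
    · refine le_of_forall_pos_le_add fun δ hδ => ?_
      obtain ⟨t, ht, h⟩ := hrec (δ / 2) (by linarith) k
      obtain ⟨e, rfl⟩ := Nat.exists_eq_add_of_le ht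
      have c1 := hTn e (T^[n + k] y) (T^[r + k] y)
      rw [← Function.iterate_add_apply, ← Function.iterate_add_apply] at c1
      have c2 := hTn n (T^[k + e] y) y
      have c3 := hTn r (T^[k + e] y) y
      rw [← Function.iterate_add_apply] at c2 c3
      rw [show n + (k + e) = e + (n + k) by ring, map_sub_rev] at c2
      rw [show r + (k + e) = e + (r + k) by ring] at c3
      have d1 := tri (T^[n] y) (T^[e + (n + k)] y) (T^[r] y)
      have d2 := tri (T^[e + (n + k)] y) (T^[e + (r + k)] y) (T^[r] y)
      linarith
  obtain ⟨p, hp, hpk⟩ := iso_periodic N hNc F hF1 hF2 X hX (fun n => (T^[n] y : Fin m → ℝ))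
    (fun n => (T^[n] y).2) hiso (show 0 < ε / 3 by linarith)
  obtain ⟨n₀, hn₀⟩ := hclose (ε / 3) (by linarith)
  have a1 := hn₀ n₀ le_rfl
  refine ⟨φ n₀, p, hp, fun k => ?_⟩
  have b1 := hTn (p * k) (T^[φ n₀] x) y
  rw [← Function.iterate_add_apply, add_comm] at b1
  have b2 := hpk k
  have d1 := tri (T^[φ n₀ + p * k] x) (T^[p * k] y) (T^[φ n₀] x)
  have d2 := tri (T^[p * k] y) y (T^[φ n₀] x)
  simp only [Function.iterate_zero, id] at b2
  rw [map_sub_rev N (y : Fin m → ℝ)] at d2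
  linarith


theorem semi_cont {m : ℕ} (N : Seminorm ℝ (Fin m → ℝ)) : Continuous N :=
  N.convexOn.locallyLipschitz.continuous

theorem semi_lower {m : ℕ} (N : Seminorm ℝ (Fin m → ℝ)) (hN : ∀ y, N y = 0 → y = 0) :
    ∃ c > 0, ∀ y, c * ‖y‖ ≤ N y := by
  rcases (Metric.sphere (0 : Fin m → ℝ) 1).eq_empty_or_nonempty with h | h
  · refine ⟨1, one_pos, fun y => ?_⟩
    have : y = 0 := by
      by_contra hy
      have hm : ‖y‖⁻¹ • y ∈ Metric.sphere (0 : Fin m → ℝ) 1 := by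
        simp [norm_smul, hy]
      rw [h] at hm; exact hm
    subst this; simp
  · obtain ⟨z, hz, hmin⟩ := (isCompact_sphere (0 : Fin m → ℝ) 1).exists_isMinOn h
      (semi_cont N).continuousOn
    have hz1 : ‖z‖ = 1 := by simpa using hz
    refine ⟨N z, lt_of_le_of_ne (apply_nonneg N z) fun h0 => ?_, fun y => ?_⟩
    · rw [hN z h0.symm] at hz1; simp at hz1
    · by_cases hy : y = 0
      · subst hy; simp
      have hm : ‖y‖⁻¹ • y ∈ Metric.sphere (0 : Fin m → ℝ) 1 := by
        simp [norm_smul, hy]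
      have h1 : N z ≤ N (‖y‖⁻¹ • y) := hmin hm
      rw [map_smul_eq_mul, norm_inv, norm_norm, ← div_eq_inv_mul,
        le_div_iff₀ (norm_pos_iff.2 hy)] at h1
      exact h1

theorem semi_functional {m : ℕ} (N : Seminorm ℝ (Fin m → ℝ)) (y : Fin m → ℝ) :
    ∃ f : Fin m → ℝ, (∀ z, f ⬝ᵥ z ≤ N z) ∧ f ⬝ᵥ y = N y := by
  by_cases hy : y = 0
  · subst hy; exact ⟨0, fun z => by simp, by simp⟩
  have hnonneg : ∀ z, 0 ≤ N z := fun z => apply_nonneg N z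
  obtain ⟨G, hG1, hG2⟩ := exists_extension_of_le_sublinear (LinearPMap.mkSpanSingleton y (N y) hy) N
    (fun c hc x => by rw [map_smul_eq_mul, Real.norm_of_nonneg hc.le]) (map_add_le_add N) (by
      rintro ⟨x, hx⟩
      obtain ⟨c, rfl⟩ := Submodule.mem_span_singleton.1 hx
      rw [show (LinearPMap.mkSpanSingleton y (N y) hy) ⟨c • y, hx⟩ = c • N y from LinearPMap.mkSpanSingleton'_apply (σ := RingHom.id ℝ) y (N y) _ c hx]
      simp only [map_smul_eq_mul, RingHom.id_apply, smul_eq_mul]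
      exact mul_le_mul_of_nonneg_right (le_abs_self c) (hnonneg y))
  have hrep : ∀ z, (fun i => G (Pi.single i 1)) ⬝ᵥ z = G z := by
    intro z
    conv_rhs => rw [← Finset.univ_sum_single z]
    rw [map_sum, dotProduct]
    refine Finset.sum_congr rfl fun i _ => ?_
    rw [show (Pi.single i (z i) : Fin m → ℝ) = z i • Pi.single i 1 by
      rw [← Pi.single_smul]; simp, map_smul, smul_eq_mul, mul_comm]
  refine ⟨fun i => G (Pi.single i 1), fun z => by rw [hrep]; exact hG2 z, ?_⟩
  rw [hrep]
  have := hG1 ⟨y, Submodule.mem_span_singleton_self y⟩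
  rw [this]
  exact LinearPMap.mkSpanSingleton'_apply_self y (N y) _ _

theorem poly_functionals {m : ℕ} (N : Seminorm ℝ (Fin m → ℝ)) (hN : ∀ y, N y = 0 → y = 0)
    (hpoly : (Set.extremePoints ℝ {y : Fin m → ℝ | N y ≤ 1}).Finite) :
    ∃ F : Finset (Fin m → ℝ), (∀ f ∈ F, ∀ y, f ⬝ᵥ y ≤ N y) ∧ ∀ y, ∃ f ∈ F, f ⬝ᵥ y = N y := by
  classical
  obtain ⟨c, hc, hlow⟩ := semi_lower N hN
  have hNc := semi_cont N
  set B := {y : Fin m → ℝ | N y ≤ 1} with hB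
  have hBconv : Convex ℝ B := by
    have := N.convexOn.convex_le 1
    simpa [hB] using this
  have hBcomp : IsCompact B := by
    refine Metric.isCompact_of_isClosed_isBounded (isClosed_le hNc continuous_const) ?_
    refine (Metric.isBounded_closedBall (x := (0 : Fin m → ℝ)) (r := 1 / c)).subset fun y hy => ?_
    rw [mem_closedBall_zero_iff, le_div_iff₀ hc, mul_comm]
    exact (hlow y).trans hy
  set E := Set.extremePoints ℝ B with hE
  have hKM := closure_convexHull_extremePoints hBcomp hBconv
  have hdc : ∀ f : Fin m → ℝ, Continuous fun y => f ⬝ᵥ y := fun f => by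
    unfold dotProduct; fun_prop
  have hdc' : ∀ y : Fin m → ℝ, Continuous fun f => f ⬝ᵥ y := fun f => by
    unfold dotProduct; fun_prop
  let P : Set (Fin m → ℝ) := {f | ∀ e ∈ E, f ⬝ᵥ e ≤ 1}
  have hPB : ∀ f ∈ P, ∀ y, f ⬝ᵥ y ≤ N y := by
    intro f hf
    have h1 : B ⊆ {y | f ⬝ᵥ y ≤ 1} := by
      rw [← hKM]
      refine closure_minimal (convexHull_min hf ?_) (isClosed_le (hdc f) continuous_const)
      intro a ha b hb s t hs ht hst
      simp only [Set.mem_setOf_eq, dotProduct_add, dotProduct_smul, smul_eq_mul] at *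
      nlinarith
    intro y
    by_cases hy : N y = 0
    · rw [hN y hy]; simp
    have hy' : 0 < N y := lt_of_le_of_ne (apply_nonneg N y) (Ne.symm hy)
    have h2 : (N y)⁻¹ • y ∈ B := by
      simp only [hB, Set.mem_setOf_eq]
      rw [map_smul_eq_mul, norm_inv, Real.norm_of_nonneg hy'.le, inv_mul_cancel₀ hy]
    have h3 := h1 h2
    simp only [Set.mem_setOf_eq, dotProduct_smul, smul_eq_mul] at h3
    rwa [← div_eq_inv_mul, div_le_one hy'] at h3
  have hBP : ∀ f : Fin m → ℝ, (∀ y, f ⬝ᵥ y ≤ N y) → f ∈ P := fun f hf e he =>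
    (hf e).trans he.1
  have hPclosed : IsClosed P := by
    have : P = ⋂ e ∈ E, {f | f ⬝ᵥ e ≤ 1} := by ext f; simp [P]
    rw [this]
    exact isClosed_biInter fun e _ => isClosed_le (hdc' e) continuous_const
  have hPcomp : IsCompact P := by
    refine Metric.isCompact_of_isClosed_isBounded hPclosed ?_
    refine (Metric.isBounded_closedBall (x := (0 : Fin m → ℝ)) (r := ∑ i, N (Pi.single i 1))).subset fun f hf => ?_
    rw [mem_closedBall_zero_iff, pi_norm_le_iff_of_nonneg (Finset.sum_nonneg fun i _ => apply_nonneg N _)]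
    intro i
    have h1 := hPB f hf (Pi.single i 1)
    have h2 := hPB f hf (-Pi.single i 1)
    rw [map_neg_eq_map, dotProduct_neg] at h2
    simp only [dotProduct_single, mul_one] at h1 h2
    refine le_trans ?_ (Finset.single_le_sum (f := fun i => N (Pi.single i 1)) (fun i _ => apply_nonneg N _) (Finset.mem_univ i))
    rw [Real.norm_eq_abs, abs_le]; constructor <;> linarith
  have hfin : (Set.extremePoints ℝ P).Finite := by
    have hinj : Set.InjOn (fun f : Fin m → ℝ => hpoly.toFinset.filter fun e => f ⬝ᵥ e = 1)
        (Set.extremePoints ℝ P) := by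
      intro f hf f' hf' h
      simp only at h
      have hact : ∀ e ∈ E, f ⬝ᵥ e = 1 → f' ⬝ᵥ e = 1 := by
        intro e he h1
        have : e ∈ hpoly.toFinset.filter fun e => f ⬝ᵥ e = 1 :=
          Finset.mem_filter.2 ⟨hpoly.mem_toFinset.2 he, h1⟩
        rw [h] at this
        exact (Finset.mem_filter.1 this).2
      have hev : ∀ᶠ t in 𝓝[>] (0:ℝ), ∀ e ∈ E, f ⬝ᵥ e + t * (f' ⬝ᵥ e - f ⬝ᵥ e) ≤ 1 ∧
          f ⬝ᵥ e - t * (f' ⬝ᵥ e - f ⬝ᵥ e) ≤ 1 := by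
        rw [Set.Finite.eventually_all hpoly]
        intro e he
        by_cases h1 : f ⬝ᵥ e = 1
        · rw [hact e he h1, h1]; simp
        · have hlt : f ⬝ᵥ e < 1 := lt_of_le_of_ne (hf.1 e he) h1
          have c1 : Tendsto (fun t : ℝ => f ⬝ᵥ e + t * (f' ⬝ᵥ e - f ⬝ᵥ e)) (𝓝[>] 0) (𝓝 (f ⬝ᵥ e)) := by
            have : Continuous (fun t : ℝ => f ⬝ᵥ e + t * (f' ⬝ᵥ e - f ⬝ᵥ e)) := by fun_prop
            have := this.tendsto 0
            simp only [zero_mul, add_zero] at this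
            exact this.mono_left nhdsWithin_le_nhds
          have c2 : Tendsto (fun t : ℝ => f ⬝ᵥ e - t * (f' ⬝ᵥ e - f ⬝ᵥ e)) (𝓝[>] 0) (𝓝 (f ⬝ᵥ e)) := by
            have : Continuous (fun t : ℝ => f ⬝ᵥ e - t * (f' ⬝ᵥ e - f ⬝ᵥ e)) := by fun_prop
            have := this.tendsto 0
            simp only [zero_mul, sub_zero] at this
            exact this.mono_left nhdsWithin_le_nhds
          filter_upwards [c1.eventually (gt_mem_nhds hlt), c2.eventually (gt_mem_nhds hlt)] with t a b
          exact ⟨a.le, b.le⟩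
      obtain ⟨t, ht, ht0⟩ := (hev.and self_mem_nhdsWithin).exists
      have ht0 : 0 < t := ht0
      have p1 : f + t • (f' - f) ∈ P := fun e he => by
        have := (ht e he).1
        simpa [add_dotProduct, smul_dotProduct, sub_dotProduct] using this
      have p2 : f - t • (f' - f) ∈ P := fun e he => by
        have := (ht e he).2
        simpa [sub_dotProduct, smul_dotProduct] using this
      have hseg : f ∈ openSegment ℝ (f + t • (f' - f)) (f - t • (f' - f)) :=
        ⟨1/2, 1/2, by norm_num, by norm_num, by norm_num, by module⟩
      have := hf.2 p1 p2 hseg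
      have h5 : t • (f' - f) = 0 := by simpa using this
      rcases smul_eq_zero.1 h5 with h6 | h6
      · exact absurd h6 ht0.ne'
      · exact (sub_eq_zero.1 h6).symm
    refine Set.Finite.of_finite_image ?_ hinj
    refine (hpoly.toFinset.powerset.finite_toSet).subset ?_
    rintro _ ⟨f, _, rfl⟩
    exact Finset.mem_powerset.2 (Finset.filter_subset _ _)
  refine ⟨hfin.toFinset, fun f hf => hPB f (hfin.mem_toFinset.1 hf).1, fun y => ?_⟩
  obtain ⟨f0, hf0, hf0y⟩ := semi_functional N y
  let L : StrongDual ℝ (Fin m → ℝ) := ∑ i, (y i) • ContinuousLinearMap.proj i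
  have hL : ∀ f, L f = f ⬝ᵥ y := fun f => by
    simp [L, dotProduct, mul_comm]
  have hexp : IsExposed ℝ P (L.toExposed P) := ContinuousLinearMap.toExposed.isExposed
  have hne : (L.toExposed P).Nonempty :=
    ⟨f0, hBP f0 hf0, fun f hf => by rw [hL, hL, hf0y]; exact hPB f hf y⟩
  obtain ⟨f, hf⟩ := (hexp.isCompact hPcomp).extremePoints_nonempty hne
  refine ⟨f, hfin.mem_toFinset.2 (hexp.isExtreme.extremePoints_subset_extremePoints hf), ?_⟩
  refine le_antisymm (hPB f hf.1.1 y) ?_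
  have := hf.1.2 f0 (hBP f0 hf0)
  rwa [hL, hL, hf0y] at this


theorem foldr_nonexp {m : ℕ} (N : Seminorm ℝ (Fin m → ℝ)) {X : Set (Fin m → ℝ)} {A : Type*}
    (T : A → X → X) [LeftCommutative T]
    (hT : ∀ a (x y : X), N ((T a x : Fin m → ℝ) - T a y) ≤ N ((x : Fin m → ℝ) - y))
    (t : Multiset A) (x y : X) :
    N (((t.foldr T x : X) : Fin m → ℝ) - ((t.foldr T y : X) : Fin m → ℝ)) ≤ N ((x : Fin m → ℝ) - y) := by
  induction t using Multiset.induction with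
  | empty => simp
  | cons a t ih => rw [Multiset.foldr_cons, Multiset.foldr_cons]; exact (hT _ _ _).trans ih

theorem foldr_replicate {X A : Type*} (T : A → X → X) [LeftCommutative T] (a : A) (n : ℕ) (x : X) :
    (Multiset.replicate n a).foldr T x = (T a)^[n] x := by
  induction n with
  | zero => simp
  | succ n ih => rw [Multiset.replicate_succ, Multiset.foldr_cons, ih, Function.iterate_succ_apply']

theorem foldr_close {m : ℕ} (N : Seminorm ℝ (Fin m → ℝ)) {X : Set (Fin m → ℝ)} {A : Type*}
    (T : A → X → X) [LeftCommutative T]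
    (hT : ∀ a (x y : X), N ((T a x : Fin m → ℝ) - T a y) ≤ N ((x : Fin m → ℝ) - y)) (x : X)
    (n c : A → ℕ) {ε : ℝ}
    (h : ∀ a, N (((T a)^[n a] x : Fin m → ℝ) - (T a)^[c a] x) ≤ ε) (s : Finset A) :
    N ((((∑ a ∈ s, Multiset.replicate (n a) a).foldr T x : X) : Fin m → ℝ) -
      (((∑ a ∈ s, Multiset.replicate (c a) a).foldr T x : X) : Fin m → ℝ)) ≤ s.card * ε := by
  classical
  induction s using Finset.induction_on with
  | empty => simp
  | insert a s ha ih =>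
    rw [Finset.sum_insert ha, Finset.sum_insert ha, Finset.card_insert_of_notMem ha]
    set u := ∑ a ∈ s, Multiset.replicate (n a) a
    set v := ∑ a ∈ s, Multiset.replicate (c a) a
    have h1 : N ((((Multiset.replicate (n a) a + u).foldr T x : X) : Fin m → ℝ) -
      (((Multiset.replicate (c a) a + u).foldr T x : X) : Fin m → ℝ)) ≤ ε := by
      rw [add_comm _ u, add_comm _ u, Multiset.foldr_add, Multiset.foldr_add]
      refine (foldr_nonexp N T hT _ _ _).trans ?_
      rw [foldr_replicate, foldr_replicate]; exact h a
    have h2 : N ((((Multiset.replicate (c a) a + u).foldr T x : X) : Fin m → ℝ) -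
      (((Multiset.replicate (c a) a + v).foldr T x : X) : Fin m → ℝ)) ≤ s.card * ε := by
      rw [Multiset.foldr_add, Multiset.foldr_add]
      exact (foldr_nonexp N T hT _ _ _).trans ih
    have := map_add_le_add N
      ((((Multiset.replicate (n a) a + u).foldr T x : X) : Fin m → ℝ) - (((Multiset.replicate (c a) a + u).foldr T x : X) : Fin m → ℝ))
      ((((Multiset.replicate (c a) a + u).foldr T x : X) : Fin m → ℝ) - (((Multiset.replicate (c a) a + v).foldr T x : X) : Fin m → ℝ))
    rw [sub_add_sub_cancel] at this
    push_cast
    linarith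

/-- A deterministic commutative stochastic game on a compact subset of `ℝ^m`, with finite action
sets, a transition that is `1`-Lipschitz for a polyhedral norm `N` (a norm whose closed unit
ball has finitely many extreme points) and a continuous payoff, has a uniform value from every
initial state. -/
theorem commutative_stochastic_game_has_uniform_value_polyhedral
    {m : ℕ} {I J : Type*} [Fintype I] [Nonempty I] [Fintype J] [Nonempty J]
    (N : Seminorm ℝ (Fin m → ℝ)) (hN : ∀ y, N y = 0 → y = 0)
    (hpoly : (Set.extremePoints ℝ {y : Fin m → ℝ | N y ≤ 1}).Finite)
    (X : Set (Fin m → ℝ)) (hXne : X.Nonempty) (hXc : IsCompact X)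
    (q : X → I → J → X)
    (hLip : ∀ (i : I) (j : J) (x y : X),
      N ((q x i j : Fin m → ℝ) - (q y i j : Fin m → ℝ)) ≤ N ((x : Fin m → ℝ) - (y : Fin m → ℝ)))
    (hcomm : ∀ (x : X) (i i' : I) (j j' : J), q (q x i j) i' j' = q (q x i' j') i j)
    (g : X → I → J → ℝ)
    (hg01 : ∀ x i j, g x i j ∈ Set.Icc (0 : ℝ) 1)
    (hgc : ∀ i j, Continuous fun x => g x i j)
    (x₁ : X) :
    ∃ v : ℝ, Guarantees1 q g x₁ v ∧ Guarantees2 q g x₁ v := by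
  classical
  obtain ⟨F, hF1, hF2⟩ := poly_functionals N hN hpoly
  obtain ⟨c, hc, hlow⟩ := semi_lower N hN
  have hNc := semi_cont N
  apply uniform_of_approx
  intro ε hε
  -- uniform continuity
  have huc : ∃ δ > 0, ∀ x y : X, N ((x : Fin m → ℝ) - y) ≤ δ → ∀ i j, |g x i j - g y i j| ≤ ε / 2 := by
    have : CompactSpace X := isCompact_iff_compactSpace.1 hXc
    have h1 : Continuous (fun x (a : I × J) => g x a.1 a.2) := continuous_pi fun a => hgc a.1 a.2
    have h2 := CompactSpace.uniformContinuous_of_continuous h1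
    obtain ⟨δ, hδ, h⟩ := Metric.uniformContinuous_iff.1 h2 (ε / 2) (by linarith)
    refine ⟨c * (δ / 2), by positivity, fun x y hxy i j => ?_⟩
    have h3 : ‖(x : Fin m → ℝ) - y‖ ≤ δ / 2 := le_of_mul_le_mul_left ((hlow _).trans hxy) hc
    have h4 := h (a := x) (b := y) (by rw [Subtype.dist_eq, dist_eq_norm]; linarith)
    have h5 := (dist_le_pi_dist (fun (a : I × J) => g x a.1 a.2) (fun a => g y a.1 a.2) (i, j)).trans h4.le
    exact h5
  obtain ⟨δ, hδ, hgδ⟩ := huc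
  let T : I × J → X → X := fun a x => q x a.1 a.2
  have : LeftCommutative T := ⟨fun a b x => hcomm _ _ _ _ _⟩
  have hT : ∀ a (x y : X), N ((T a x : Fin m → ℝ) - T a y) ≤ N ((x : Fin m → ℝ) - y) :=
    fun a x y => hLip _ _ _ _
  have hA : (0:ℝ) < Fintype.card (I × J) := by exact_mod_cast Fintype.card_pos
  have hper := fun a => nonexp_periodic N hNc F hF1 hF2 X hXc (T a) (hT a) x₁
    (show 0 < δ / Fintype.card (I × J) by positivity)
  choose M p hp hMp using hper
  let S := ∀ a : I × J, Fin (M a + p a)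
  let cap : ∀ a : I × J, Fin (M a + p a) → Fin (M a + p a) := fun a k =>
    if h : k.1 + 1 < M a + p a then ⟨k.1 + 1, h⟩ else ⟨M a, by have := hp a; omega⟩
  let q' : S → I → J → S := fun s i j => Function.update s (i, j) (cap (i, j) (s (i, j)))
  let pr : S → X := fun s => (∑ a, Multiset.replicate (s a).1 a).foldr T x₁
  let g' : S → I → J → ℝ := fun s i j => g (pr s) i j
  let Q : I × J → ℕ → ℕ → Prop := fun a n k => ∃ r, n = k + p a * r ∧ (r = 0 ∨ M a ≤ k)
  let R : X → S → Prop := fun x s => ∃ t : Multiset (I × J), x = t.foldr T x₁ ∧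
    ∀ a, Q a (t.count a) (s a).1
  have hR : ∀ x s i j, R x s → R (q x i j) (q' s i j) := by
    rintro x s i j ⟨t, rfl, ht⟩
    refine ⟨(i, j) ::ₘ t, by rw [Multiset.foldr_cons], fun a => ?_⟩
    by_cases ha : a = (i, j)
    · subst ha
      obtain ⟨r, hr, hr'⟩ := ht (i, j)
      rw [Multiset.count_cons_self]
      have hlt := (s (i, j)).2
      simp only [q', Function.update_self, cap]
      split_ifs with h
      · refine ⟨r, by simp only; omega, ?_⟩
        rcases hr' with h' | h'
        · exact Or.inl h'
        · exact Or.inr (by simp only; omega)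
      · refine ⟨r + 1, ?_, Or.inr le_rfl⟩
        simp only [mul_add, mul_one]; omega
    · rw [Multiset.count_cons_of_ne ha]
      simp only [q', Function.update_of_ne ha]
      exact ht a
  have hclose : ∀ x s, R x s → N ((x : Fin m → ℝ) - pr s) ≤ δ := by
    rintro x s ⟨t, rfl, ht⟩
    have h1 : ∀ a, N (((T a)^[t.count a] x₁ : Fin m → ℝ) - (T a)^[(s a).1] x₁) ≤
        δ / Fintype.card (I × J) := by
      intro a
      obtain ⟨r, hr, h0 | h0⟩ := ht a
      · rw [hr, h0]; simp only [mul_zero, add_zero, sub_self, map_zero]; positivity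
      · obtain ⟨e, he⟩ := Nat.exists_eq_add_of_le h0
        have h2 := foldr_nonexp N T hT (Multiset.replicate e a) ((T a)^[M a + p a * r] x₁) ((T a)^[M a] x₁)
        rw [foldr_replicate, foldr_replicate, ← Function.iterate_add_apply,
          ← Function.iterate_add_apply] at h2
        rw [hr, he, show M a + e + p a * r = e + (M a + p a * r) by ring, add_comm (M a) e]
        exact h2.trans (hMp a r)
    have h2 := foldr_close N T hT x₁ (fun a => t.count a) (fun a => (s a).1) h1 Finset.univ
    have h3 : ∑ a, Multiset.replicate (t.count a) a = t := by
      ext b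
      rw [Multiset.count_sum']
      simp [Multiset.count_replicate]
    rw [h3, Finset.card_univ, mul_div_cancel₀ _ hA.ne'] at h2
    exact h2
  let s₁ : S := fun a => ⟨0, by have := hp a; omega⟩
  have hR1 : R x₁ s₁ := ⟨0, by simp, fun a => ⟨0, by simp [s₁], Or.inl rfl⟩⟩
  obtain ⟨v, ⟨σ, N1, h1⟩, τ, N2, h2⟩ := finite_game q' g' (fun s i j => hg01 _ _ _) s₁
    (show 0 < ε / 2 by linarith)
  have hcl := fun σ τ n => gamePayoff_close q g q' g' R hR (e := ε / 2) (by linarith)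
    (fun x s i j h => hgδ _ _ (hclose x s h) i j) σ τ n x₁ s₁ hR1
  refine ⟨v, ⟨σ, N1, fun τ n hn => ?_⟩, τ, N2, fun σ n hn => ?_⟩
  · have := abs_le.1 (hcl σ τ n)
    linarith [h1 τ n hn, this.1]
  · have := abs_le.1 (hcl σ τ n)
    linarith [h2 σ n hn, this.2]
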